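/- Let Δ⁻ₙ = n² + 4 for integers n ≥ 1, and let h(Δ⁻ₙ) denote the order of the (wide) class group of the quadratic order of discriminant Δ⁻ₙ. Then log h(Δ⁻ₙ) = log n + o(log n) as n → ∞; that is, (log h(Δ⁻ₙ) − log n)/log n → 0 as n → ∞. -/

import Mathlib

noncomputable section

/-- A complex square root of an integer `d`. -/
def sqrtD (d : ℤ) : ℂ :=
  if 0 ≤ d then ((Real.sqrt d : ℝ) : ℂ) else Complex.I * ((Real.sqrt (-d) : ℝ) : ℂ)

/-- The element `(Δ + √Δ)/2` generating the quadratic order of discriminant `Δ`. -/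
def omegaD (d : ℤ) : ℂ := ((d : ℂ) + sqrtD d) / 2

/-- The quadratic order `O_Δ = ℤ[(Δ + √Δ)/2]` of discriminant `Δ`, as a subring of `ℂ`. -/
def QOrder (d : ℤ) : Subring ℂ := Subring.closure {omegaD d}

/-- The class number `h_Δ`: the order of the (wide) class group of `O_Δ`,
the group of invertible fractional ideals modulo principal fractional ideals. -/
def classNumber (d : ℤ) : ℕ := Nat.card (ClassGroup (QOrder d))

section

open scoped ComplexOrder

lemma estermann_core {k : ℕ → ℝ} {δ lam B S : ℝ} (hδ : 0 < δ) (hδ' : δ ≤ 1/8) (hB : 1 ≤ B)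
    (hS : HasSum (fun m => k m * (1+δ)^m) S) (hk : ∀ m, -lam ≤ k m) (hk0 : 1 - lam ≤ k 0)
    (hkB : ∀ m, |k m| ≤ B * (2/3)^m) (hSl : S ≤ lam / δ) :
    δ/6 * (8*B)^(-(4*δ)) ≤ lam := by
  set M := ⌈4 * Real.log (8*B)⌉₊ with hM
  have hlog : 0 < Real.log (8*B) := Real.log_pos (by linarith)
  have hM1 : 4 * Real.log (8*B) ≤ M := Nat.le_ceil _
  have hM2 : (M:ℝ) < 4 * Real.log (8*B) + 1 := Nat.ceil_lt_add_one (by positivity)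
  have hMpos : 0 < M := by
    rw [hM]; exact Nat.ceil_pos.mpr (by positivity)
  have hsplit := hS.summable.sum_add_tsum_nat_add M
  rw [hS.tsum_eq] at hsplit
  have htail : ‖∑' i, k (i + M) * (1+δ)^(i+M)‖ ≤ B * (3/4)^M * 4 := by
    apply tsum_of_norm_bounded (g := fun i => B * (3/4)^M * (3/4)^i)
    · have := (hasSum_geometric_of_lt_one (r := (3/4:ℝ)) (by norm_num) (by norm_num)).mul_left
        (B * (3/4)^M)
      norm_num at this ⊢
      exact this
    · intro i
      rw [norm_mul, Real.norm_eq_abs, Real.norm_eq_abs, abs_of_pos (show 0 < (1+δ)^(i+M) by positivity)]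
      calc |k (i+M)| * (1+δ)^(i+M) ≤ (B * (2/3)^(i+M)) * (1+δ)^(i+M) := by
            gcongr; exact hkB _
        _ = B * ((2/3) * (1+δ))^(i+M) := by rw [mul_pow]; ring
        _ ≤ B * (3/4)^(i+M) := by gcongr; linarith
        _ = _ := by rw [pow_add]; ring
  have hhead : 1 - lam * (((1+δ)^M - 1)/δ) ≤ ∑ i ∈ Finset.range M, k i * (1+δ)^i := by
    have hg : ∑ i ∈ Finset.range M, (1+δ)^i = ((1+δ)^M - 1)/δ := by
      rw [geom_sum_eq (by linarith)]; congr 1; ring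
    rw [← hg, Finset.mul_sum]
    obtain ⟨M', hM'⟩ : ∃ M', M = M' + 1 := ⟨M - 1, by omega⟩
    rw [hM', Finset.sum_range_succ', Finset.sum_range_succ' (fun i => k i * (1+δ)^i)]
    have : ∑ i ∈ Finset.range M', (-(lam * (1+δ)^(i+1))) ≤ ∑ i ∈ Finset.range M', k (i+1) * (1+δ)^(i+1) := by
      apply Finset.sum_le_sum
      intro i _
      rw [← neg_mul]
      gcongr
      exact hk _
    rw [Finset.sum_neg_distrib] at this
    simp only [pow_zero, mul_one]
    linarith
  have h34 : (3/4:ℝ)^M ≤ 1/(8*B) := by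
    have h1 : (3/4:ℝ) ≤ Real.exp (-(1/4)) := by
      have := Real.add_one_le_exp (-(1/4:ℝ)); linarith
    calc (3/4:ℝ)^M ≤ (Real.exp (-(1/4)))^M := by gcongr
      _ = Real.exp (-(M/4)) := by rw [← Real.exp_nat_mul]; congr 1; ring
      _ ≤ Real.exp (-Real.log (8*B)) := by gcongr; linarith
      _ = 1/(8*B) := by rw [Real.exp_neg, Real.exp_log (by linarith), one_div]
  have h12 : B * (3/4)^M * 4 ≤ 1/2 := by
    calc B * (3/4)^M * 4 ≤ B * (1/(8*B)) * 4 := by gcongr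
      _ = 1/2 := by field_simp; norm_num
  have htail' := (abs_le.mp (htail.trans h12)).1
  have hmain : 1/2 ≤ lam * ((1+δ)^M/δ) := by
    have : lam * (((1+δ)^M - 1)/δ) = lam * ((1+δ)^M/δ) - lam/δ := by ring
    linarith
  have hw : (1+δ)^M ≤ 3 * (8*B)^(4*δ) := by
    calc (1+δ)^M ≤ (Real.exp δ)^M := by gcongr; have := Real.add_one_le_exp δ; linarith
      _ = Real.exp (M*δ) := by rw [← Real.exp_nat_mul]
      _ ≤ Real.exp ((4 * Real.log (8*B) + 1) * δ) := by gcongr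
      _ = Real.exp δ * Real.exp (Real.log (8*B) * (4*δ)) := by rw [← Real.exp_add]; congr 1; ring
      _ = Real.exp δ * (8*B)^(4*δ) := by rw [Real.rpow_def_of_pos (by linarith)]
      _ ≤ 3 * (8*B)^(4*δ) := by
        gcongr
        calc Real.exp δ ≤ Real.exp 1 := by gcongr; linarith
          _ ≤ 3 := by have := Real.exp_one_lt_d9; linarith
  have hP : 0 < (8*B)^(4*δ) := by positivity
  have hlam : 0 < lam := by
    by_contra hcon
    push Not at hcon
    have : lam * ((1+δ)^M/δ) ≤ 0 := mul_nonpos_of_nonpos_of_nonneg hcon (by positivity)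
    linarith
  have h3 : 1/2 ≤ lam * (3 * (8*B)^(4*δ)/δ) := hmain.trans (by gcongr)
  rw [Real.rpow_neg (by linarith), ← div_eq_mul_inv, div_le_iff₀ hP]
  have h4 : lam * (3 * (8*B)^(4*δ)/δ) = lam * (8*B)^(4*δ) * (3/δ) := by ring
  rw [h4, ← div_le_iff₀ (by positivity)] at h3
  calc δ/6 = 1/2/(3/δ) := by field_simp; norm_num
    _ ≤ _ := h3

lemma one_le_LSeries_two {a : ℕ → ℂ} (ha : 0 ≤ a) (ha1 : 1 ≤ a 1)
    (hab : LSeries.abscissaOfAbsConv a ≤ 1) : 1 ≤ (LSeries a 2).re := by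
  have hs : LSeriesSummable a 2 := LSeriesSummable_of_abscissaOfAbsConv_lt_re
    (lt_of_le_of_lt hab (by norm_num; exact_mod_cast (by norm_num : (1:ℝ) < 2)))
  have hs' : Summable (LSeries.term a 2) := hs
  have h := hs'.le_tsum 1 (fun j _ => by
    simpa using LSeries.term_nonneg (ha j) 2)
  have h2 : (1:ℂ) ≤ LSeries a 2 := by
    refine ha1.trans ?_
    simpa [LSeries, LSeries.term_def] using h
  exact (Complex.le_def.mp h2).1

lemma estermann {a : ℕ → ℂ} (ha : 0 ≤ a) (ha1 : 1 ≤ a 1)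
    (hab : LSeries.abscissaOfAbsConv a ≤ 1) {H : ℂ → ℂ} (hH : Differentiable ℂ H)
    (hHa : ∀ s : ℂ, 1 < s.re → H s = (s-1) * LSeries a s) {B : ℝ} (hB : 1 ≤ B)
    (hHB : ∀ s ∈ Metric.closedBall (2:ℂ) (3/2), ‖H s‖ ≤ B) {δ : ℝ} (hδ : 0 < δ) (hδ' : δ ≤ 1/8)
    (hpos : 0 ≤ (H ((1-δ : ℝ) : ℂ)).re) : δ/6*(32*B)^(-(4*δ)) ≤ (H 1).re := by
  set K := dslope H 1 with hKdef
  have hK : Differentiable ℂ K := by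
    rw [← differentiableOn_univ, Complex.differentiableOn_dslope Filter.univ_mem]
    exact hH.differentiableOn
  have hKne : ∀ s : ℂ, s ≠ 1 → K s = (H s - H 1)/(s-1) := by
    intro s hs
    rw [hKdef, dslope_of_ne _ hs, slope_def_field]
  have hab2 : LSeries.abscissaOfAbsConv a < ((2:ℝ):EReal) :=
    lt_of_le_of_lt hab (by exact_mod_cast (by norm_num : (1:ℝ) < 2))
  have hsph : ∀ z ∈ Metric.sphere (2:ℂ) (3/2), ‖K z‖ ≤ 4*B := by
    intro z hz
    have hz1 : (1/2:ℝ) ≤ ‖z - 1‖ := by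
      have h1 : ‖z - 2‖ = 3/2 := by simpa [dist_eq_norm] using hz
      have h2 : ‖z - 2‖ ≤ ‖z - 1‖ + ‖(-1:ℂ)‖ := by
        have : z - 2 = (z - 1) + (-1) := by ring
        rw [this]; exact norm_add_le _ _
      simp at h2
      linarith
    have hne : z ≠ 1 := by
      rintro rfl; norm_num at hz1
    rw [hKne z hne, norm_div, div_le_iff₀ (by linarith)]
    have e1 := hHB z (Metric.sphere_subset_closedBall hz)
    have e2 := hHB 1 (by simp [dist_eq_norm]; norm_num)
    calc ‖H z - H 1‖ ≤ ‖H z‖ + ‖H 1‖ := norm_sub_le _ _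
      _ ≤ 4*B*(1/2) := by linarith
      _ ≤ _ := by gcongr
  have hcoef : ∀ m : ℕ, iteratedDeriv m K 2 =
      iteratedDeriv m (LSeries a) 2 - H 1 * ((-1)^m * m.factorial) := by
    intro m
    have hU : {s : ℂ | 1 < s.re} ∈ nhds (2:ℂ) :=
      (isOpen_lt continuous_const Complex.continuous_re).mem_nhds (by simp)
    have hev : K =ᶠ[nhds 2] fun s => LSeries a s - H 1 * (s - 1)⁻¹ := by
      filter_upwards [hU] with s hs
      have hs1 : s ≠ 1 := by rintro rfl; simp at hs
      rw [hKne s hs1, hHa s hs]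
      have : s - 1 ≠ 0 := sub_ne_zero.mpr hs1
      field_simp
    rw [hev.iteratedDeriv_eq]
    have hinv : ContDiffAt ℂ m (fun s : ℂ => (s - 1)⁻¹) 2 := by
      apply ContDiffAt.inv
      · exact contDiffAt_id.sub contDiffAt_const
      · norm_num
    rw [iteratedDeriv_fun_sub, iteratedDeriv_const_mul _ hinv]
    · congr 2
      have := congrFun (iter_deriv_inv_linear_sub (𝕜 := ℂ) m 1 1) 2
      rw [iteratedDeriv_eq_iterate]
      simp only [one_mul, one_pow, mul_one] at this
      rw [this]; norm_num
    · exact (LSeries_analyticOnNhd a 2 (by simpa using hab2)).contDiffAt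
    · exact contDiffAt_const.mul hinv
  set k : ℕ → ℝ := fun m => ((m.factorial:ℂ)⁻¹ * ((-1)^m * iteratedDeriv m K 2)).re with hk
  have hkform : ∀ m, k m = (m.factorial:ℝ)⁻¹ * ((-1)^m * iteratedDeriv m (LSeries a) 2).re - (H 1).re := by
    intro m
    rw [hk]; simp only
    rw [hcoef m]
    have hf : (m.factorial:ℂ) ≠ 0 := by exact_mod_cast m.factorial_ne_zero
    have : (m.factorial:ℂ)⁻¹ * ((-1)^m * (iteratedDeriv m (LSeries a) 2 - H 1 * ((-1)^m * m.factorial)))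
      = ((m.factorial:ℝ)⁻¹ : ℝ) * ((-1)^m * iteratedDeriv m (LSeries a) 2) - H 1 := by
      have h1 : ((-1:ℂ)^m) * (-1)^m = 1 := by rw [← mul_pow]; simp
      push_cast
      field_simp
      linear_combination (-(m.factorial:ℂ) * H 1) * h1
    rw [this, Complex.sub_re, Complex.re_ofReal_mul]
  have hS := Complex.hasSum_taylorSeries_of_entire hK 2 ((1-δ:ℝ):ℂ)
  have hS2 : HasSum (fun m => k m * (1+δ)^m) (K ((1-δ:ℝ):ℂ)).re := by
    have := Complex.hasSum_re hS
    convert this using 2 with m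
    rw [hk]; simp only [smul_eq_mul]
    have : ((1-δ:ℝ):ℂ) - 2 = ((-1:ℂ)) * ((1+δ:ℝ):ℂ) := by push_cast; ring
    rw [this, mul_pow]
    rw [show (m.factorial:ℂ)⁻¹ * ((-1)^m * ((1+δ:ℝ):ℂ)^m * iteratedDeriv m K 2) =
      (((1+δ)^m:ℝ):ℂ) * ((m.factorial:ℂ)⁻¹ * ((-1)^m * iteratedDeriv m K 2)) by push_cast; ring]
    rw [Complex.re_ofReal_mul]; ring
  have key := estermann_core (B := 4*B) hδ hδ' (by linarith) hS2 (lam := (H 1).re) ?_ ?_ ?_ ?_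
  · convert key using 3; ring
  · intro m
    rw [hkform]
    have h0 := LSeries.iteratedDeriv_alternating ha (x := 2) hab2 m
    have h1 := (Complex.le_def.mp h0).1
    simp only [Complex.ofReal_ofNat, Complex.zero_re] at h1
    have : 0 ≤ (m.factorial:ℝ)⁻¹ * ((-1)^m * iteratedDeriv m (LSeries a) 2).re := by positivity
    linarith
  · rw [hkform]
    have := one_le_LSeries_two ha ha1 hab
    simp
    linarith
  · intro m
    rw [hk]; simp only
    refine (Complex.abs_re_le_norm _).trans ?_
    have := Complex.norm_iteratedDeriv_le_of_forall_mem_sphere_norm_le m (by norm_num) hK.diffContOnCl hsph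
    rw [norm_mul, norm_mul]
    simp only [norm_inv, Complex.norm_natCast, norm_pow, norm_neg, norm_one, one_pow, one_mul]
    rw [inv_mul_le_iff₀ (by exact_mod_cast m.factorial_pos)]
    refine this.trans (le_of_eq ?_)
    rw [div_pow, div_pow]; field_simp
  · have hne : ((1-δ:ℝ):ℂ) ≠ 1 := by
      intro h
      have : (1-δ:ℝ) = 1 := by exact_mod_cast h
      linarith
    rw [hKne _ hne]
    rw [show (((1-δ:ℝ):ℂ) - 1) = ((-δ:ℝ):ℂ) by push_cast; ring, Complex.div_ofReal_re, Complex.sub_re]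
    rw [div_neg, ← neg_div]
    gcongr
    linarith

end

section

open DirichletCharacter Filter Asymptotics

lemma charsum_period {N : ℕ} [NeZero N] {χ : DirichletCharacter ℂ N} (hχ : χ ≠ 1) (n : ℕ) :
    ∑ k ∈ Finset.range (n + N), χ (k:ZMod N) = ∑ k ∈ Finset.range n, χ (k : ZMod N) := by
  induction n with
  | zero =>
    simp only [zero_add, Finset.range_zero, Finset.sum_empty]
    have h := MulChar.sum_eq_zero_of_ne_one hχ
    rw [← h]
    refine Finset.sum_bij (fun k _ => (k : ZMod N)) (fun _ _ => Finset.mem_univ _) ?_ ?_ ?_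
    · intro a ha b hb hab
      rw [Finset.mem_range] at ha hb
      have := (ZMod.natCast_eq_natCast_iff' a b N).mp hab
      rwa [Nat.mod_eq_of_lt ha, Nat.mod_eq_of_lt hb] at this
    · intro b _
      exact ⟨b.val, Finset.mem_range.mpr b.val_lt, by simp⟩
    · intros; rfl
  | succ n ih =>
    rw [show n + 1 + N = (n + N) + 1 by ring, Finset.sum_range_succ, Finset.sum_range_succ, ih]
    simp

lemma charsum_range_bound {N : ℕ} [NeZero N] {χ : DirichletCharacter ℂ N} (hχ : χ ≠ 1) (n : ℕ) :
    ‖∑ k ∈ Finset.range n, χ (k:ZMod N)‖ ≤ N := by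
  induction n using Nat.strong_induction_on with
  | _ n ih =>
    by_cases h : n < N
    · refine (norm_sum_le _ _).trans ?_
      refine (Finset.sum_le_sum (fun k _ => χ.norm_le_one _)).trans ?_
      simp; exact_mod_cast h.le
    · obtain ⟨m, rfl⟩ : ∃ m, n = m + N := ⟨n - N, by omega⟩
      rw [charsum_period hχ]
      exact ih m (by have := NeZero.pos N; omega)

lemma charsum_le {N : ℕ} (χ : DirichletCharacter ℂ N) (n : ℕ) :
    ‖∑ k ∈ Finset.Icc 1 n, χ (k:ZMod N)‖ ≤ n := by
  refine (norm_sum_le _ _).trans ?_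
  refine (Finset.sum_le_sum (fun k _ => χ.norm_le_one _)).trans ?_
  simp

lemma charsum_bound {N : ℕ} [NeZero N] {χ : DirichletCharacter ℂ N} (hχ : χ ≠ 1) (n : ℕ) :
    ‖∑ k ∈ Finset.Icc 1 n, χ (k:ZMod N)‖ ≤ N := by
  have hN : N ≠ 1 := by
    rintro rfl
    exact hχ (Subsingleton.elim _ _)
  have h0 : χ ((0:ℕ) : ZMod N) = 0 := by
    have : Nontrivial (ZMod N) := ZMod.nontrivial_iff.mpr hN
    rw [Nat.cast_zero]; exact MulChar.map_nonunit _ not_isUnit_zero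
  have := charsum_range_bound hχ (n+1)
  rw [Finset.range_eq_Ico, Finset.sum_eq_sum_Ico_succ_bot (by omega), h0, zero_add] at this
  exact this

lemma LFunction_eq_integral {N : ℕ} [NeZero N] {χ : DirichletCharacter ℂ N} (hχ : χ ≠ 1)
    {s : ℂ} (hs : 0 < s.re) :
    LFunction χ s = s * ∫ t in Set.Ioi (1:ℝ),
      (∑ k ∈ Finset.Icc 1 ⌊t⌋₊, χ (k:ZMod N)) * (t:ℂ)^(-(s+1)) := by
  set S : ℝ → ℂ := fun t => ∑ k ∈ Finset.Icc 1 ⌊t⌋₊, χ (k:ZMod N) with hSdef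
  have hSm : Measurable S := (measurable_from_nat (f := fun n : ℕ => ∑ k ∈ Finset.Icc 1 n, χ (k:ZMod N))).comp
    Nat.measurable_floor
  have hSb : ∀ t, ‖S t‖ ≤ N := fun t => charsum_bound hχ _
  have hS0 : ∀ t < 1, S t = 0 := by
    intro t ht
    have : ⌊t⌋₊ = 0 := Nat.floor_eq_zero.mpr ht
    simp [hSdef, this]
  have hmel : ∀ s : ℂ, ∫ t in Set.Ioi (1:ℝ), S t * (t:ℂ)^(-(s+1)) = mellin S (-s) := by
    intro s
    rw [mellin]
    rw [← MeasureTheory.setIntegral_eq_of_subset_of_ae_sdiff_eq_zero (s := Set.Ioi (1:ℝ)) (t := Set.Ioi 0)]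
    · apply MeasureTheory.setIntegral_congr_fun measurableSet_Ioi
      intro t _
      simp only [smul_eq_mul]
      rw [mul_comm]; congr 2; ring
    · exact measurableSet_Ioi.nullMeasurableSet
    · exact Set.Ioi_subset_Ioi zero_le_one
    · have : ∀ᵐ t : ℝ, t ≠ 1 := by
        simp [MeasureTheory.ae_iff]
      filter_upwards [this] with t ht ht2
      rw [hS0 t]; · simp
      simp only [Set.mem_sdiff, Set.mem_Ioi, not_lt] at ht2
      exact lt_of_le_of_ne ht2.2 ht
  have hdiff : ∀ s : ℂ, 0 < s.re → DifferentiableAt ℂ (fun s => mellin S (-s)) s := by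
    intro s hs
    have h1 : DifferentiableAt ℂ (mellin S) (-s) := by
      apply mellin_differentiableAt_of_isBigO_rpow (a := 0) (b := -s.re - 1)
      · apply MeasureTheory.LocallyIntegrable.locallyIntegrableOn
        apply MeasureTheory.LocallyIntegrable.mono (g := S) (f := fun _ => (N:ℝ))
        · exact MeasureTheory.locallyIntegrable_const _
        · exact hSm.aestronglyMeasurable
        · filter_upwards with t
          simpa using hSb t
      · apply IsBigO.of_bound N
        filter_upwards with t
        simpa using hSb t
      · simpa using hs
      · apply IsBigO.of_bound 1
        have : Set.Iio (1:ℝ) ∈ nhdsWithin (0:ℝ) (Set.Ioi 0) :=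
          mem_nhdsWithin_of_mem_nhds (Iio_mem_nhds one_pos)
        filter_upwards [this] with t ht
        rw [hS0 t ht]; simp
      · simp
    exact h1.comp s differentiable_neg.differentiableAt
  have hopen : IsOpen {s : ℂ | 0 < s.re} := isOpen_lt continuous_const Complex.continuous_re
  have key : Set.EqOn (LFunction χ) (fun s => s * mellin S (-s)) {s : ℂ | 0 < s.re} := by
    refine AnalyticOnNhd.eqOn_of_preconnected_of_eventuallyEq (𝕜 := ℂ) (z₀ := 2) ?_ ?_ ?_ ?_ ?_
    · exact fun z _ => (differentiable_LFunction hχ).analyticAt z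
    · apply DifferentiableOn.analyticOnNhd _ hopen
      intro z hz
      exact (differentiableAt_id.mul (hdiff z hz)).differentiableWithinAt
    · exact (convex_halfSpace_re_gt 0).isPreconnected
    · simp
    · have hU : {s : ℂ | 1 < s.re} ∈ nhds (2:ℂ) :=
        (isOpen_lt continuous_const Complex.continuous_re).mem_nhds (by simp)
      filter_upwards [hU] with z hz
      replace hz : 1 < z.re := hz
      rw [LFunction_eq_LSeries χ hz, ← hmel]
      apply LSeries_eq_mul_integral _ le_rfl (lt_trans one_pos hz)
        (LSeriesSummable_of_one_lt_re χ hz)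
      apply IsBigO.of_bound N
      filter_upwards with n
      simpa using charsum_bound hχ n
  rw [hmel]
  exact key hs

lemma LFunction_norm_le {N : ℕ} [NeZero N] {χ : DirichletCharacter ℂ N} (hχ : χ ≠ 1)
    {s : ℂ} {C r : ℝ} (hr : 0 ≤ r) (hC : 0 ≤ C) (hrs : r < s.re)
    (hS : ∀ n : ℕ, 1 ≤ n → ‖∑ k ∈ Finset.Icc 1 n, χ (k:ZMod N)‖ ≤ C * (n:ℝ)^r) :
    ‖LFunction χ s‖ ≤ ‖s‖ * (C / (s.re - r)) := by
  rw [LFunction_eq_integral hχ (lt_of_le_of_lt hr hrs), norm_mul]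
  gcongr
  have hI : ∫ t in Set.Ioi (1:ℝ), C * t^(r - s.re - 1) = C / (s.re - r) := by
    rw [MeasureTheory.integral_const_mul, integral_Ioi_rpow_of_lt (by linarith) one_pos]
    have : s.re - r ≠ 0 := by linarith
    rw [Real.one_rpow, show r - s.re - 1 + 1 = -(s.re - r) by ring]
    field_simp
  rw [← hI]
  apply MeasureTheory.norm_integral_le_of_norm_le
  · exact ((integrableOn_Ioi_rpow_of_lt (by linarith) one_pos).const_mul C)
  · rw [MeasureTheory.ae_restrict_iff' measurableSet_Ioi]
    filter_upwards with t ht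
    have ht0 : (0:ℝ) < t := lt_trans one_pos (Set.mem_Ioi.mp ht)
    rw [norm_mul, Complex.norm_cpow_eq_rpow_re_of_pos ht0]
    have hfl : 1 ≤ ⌊t⌋₊ := Nat.le_floor (by exact_mod_cast (le_of_lt (Set.mem_Ioi.mp ht)))
    calc _ ≤ (C * (⌊t⌋₊:ℝ)^r) * t^(-(s+1)).re := by
          gcongr; exact hS _ hfl
      _ ≤ (C * t^r) * t^(-(s+1)).re := by
          gcongr
          exact Nat.floor_le ht0.le
      _ = C * t^(r - s.re - 1) := by
          rw [mul_assoc, ← Real.rpow_add ht0]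
          congr 2
          simp; ring

lemma LFunction_ball_bound {N : ℕ} [NeZero N] {χ : DirichletCharacter ℂ N} (hχ : χ ≠ 1)
    {s : ℂ} (hs : s ∈ Metric.closedBall (2:ℂ) (3/2)) : ‖LFunction χ s‖ ≤ 7 * N := by
  have h1 : ‖s - 2‖ ≤ 3/2 := by simpa [dist_eq_norm] using hs
  have h2 : (1/2:ℝ) ≤ s.re := by
    have := (abs_le.mp ((Complex.abs_re_le_norm (s-2)).trans h1)).1
    simp at this; linarith
  have h3 : ‖s‖ ≤ 7/2 := by
    calc ‖s‖ = ‖(s - 2) + 2‖ := by ring_nf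
      _ ≤ ‖s - 2‖ + ‖(2:ℂ)‖ := norm_add_le _ _
      _ ≤ 7/2 := by simp; linarith
  have := LFunction_norm_le hχ (s := s) (C := N) (r := 0) le_rfl (by positivity) (by linarith)
    (fun n _ => by simpa using charsum_bound hχ n)
  refine this.trans ?_
  calc ‖s‖ * (N / (s.re - 0)) ≤ 7/2 * (N / (1/2)) := by
        rw [sub_zero]
        gcongr
    _ = 7 * N := by ring

lemma LFunction_one_bound {N : ℕ} [NeZero N] {χ : DirichletCharacter ℂ N} (hχ : χ ≠ 1)
    {θ : ℝ} (h0 : 0 < θ) (h1 : θ ≤ 1) : ‖LFunction χ 1‖ ≤ (N:ℝ)^θ / θ := by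
  have := LFunction_norm_le hχ (s := 1) (C := (N:ℝ)^θ) (r := 1 - θ) (by linarith) (by positivity)
    (by simpa using h0) (fun n hn => by
      set A := ‖∑ k ∈ Finset.Icc 1 n, χ (k:ZMod N)‖ with hA
      have e1 : A ≤ N := charsum_bound hχ n
      have e2 : A ≤ n := charsum_le χ n
      have hA0 : 0 ≤ A := norm_nonneg _
      rcases hA0.eq_or_lt with h | h
      · rw [← h]; positivity
      calc A = A^θ * A^(1-θ) := by rw [← Real.rpow_add h]; simp
        _ ≤ (N:ℝ)^θ * (n:ℝ)^(1-θ) := by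
          gcongr)
  simpa using this

end

section

open DirichletCharacter Filter Asymptotics
open scoped ComplexOrder

/-- coefficient function of a character -/
def chA {N : ℕ} (χ : DirichletCharacter ℂ N) : ArithmeticFunction ℂ := toArithmeticFunction (χ ·)

lemma chA_apply {N : ℕ} (χ : DirichletCharacter ℂ N) (n : ℕ) (hn : n ≠ 0) : chA χ n = χ n := by
  simp [chA, toArithmeticFunction, hn]

lemma chA_mult {N : ℕ} (χ : DirichletCharacter ℂ N) : (chA χ).IsMultiplicative :=
  isMultiplicative_toArithmeticFunction χ

lemma chA_summable {N : ℕ} (χ : DirichletCharacter ℂ N) {s : ℂ} (hs : 1 < s.re) :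
    LSeriesSummable (chA χ) s :=
  LSeriesSummable_of_bounded_of_one_lt_re (m := 1) (fun n hn ↦ by
    rw [chA_apply _ _ hn]; exact norm_le_one χ _) hs

lemma chA_LSeries {N : ℕ} [NeZero N] (χ : DirichletCharacter ℂ N) {s : ℂ} (hs : 1 < s.re) :
    LSeries (chA χ) s = LFunction χ s := by
  rw [LFunction_eq_LSeries χ hs]
  exact LSeries_congr (fun {n} hn => chA_apply _ _ hn) s

lemma zetaMul_eq {N : ℕ} (χ : DirichletCharacter ℂ N) :
    zetaMul χ = (ArithmeticFunction.zeta : ArithmeticFunction ℂ) * chA χ := rfl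

/-- product of two characters of different level -/
def prodChar {N M : ℕ} (χ : DirichletCharacter ℂ N) (ψ : DirichletCharacter ℂ M) :
    DirichletCharacter ℂ (N * M) :=
  changeLevel (dvd_mul_right N M) χ * changeLevel (dvd_mul_left M N) ψ

lemma prodChar_apply {N M : ℕ} (χ : DirichletCharacter ℂ N) (ψ : DirichletCharacter ℂ M) (n : ℕ) :
    prodChar χ ψ n = χ n * ψ n := by
  rw [prodChar, MulChar.mul_apply]
  by_cases h : IsUnit ((n : ℕ) : ZMod (N * M))
  · obtain ⟨u, hu⟩ := h
    rw [← hu, changeLevel_eq_cast_of_dvd, changeLevel_eq_cast_of_dvd, hu]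
    rw [ZMod.cast_natCast (dvd_mul_right N M), ZMod.cast_natCast (dvd_mul_left M N)]
  · rw [MulChar.map_nonunit _ h, zero_mul]
    rw [ZMod.isUnit_iff_coprime] at h
    by_cases h1 : IsUnit ((n : ℕ) : ZMod N)
    · by_cases h2 : IsUnit ((n : ℕ) : ZMod M)
      · rw [ZMod.isUnit_iff_coprime] at h1 h2
        exact absurd (Nat.Coprime.mul_right h1 h2) h
      · rw [MulChar.map_nonunit _ h2, mul_zero]
    · rw [MulChar.map_nonunit _ h1, zero_mul]

lemma chA_prod {N M : ℕ} (χ : DirichletCharacter ℂ N) (ψ : DirichletCharacter ℂ M) :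
    chA (prodChar χ ψ) = (chA χ).pmul (chA ψ) := by
  ext n
  rcases eq_or_ne n 0 with rfl | hn
  · simp
  · simp [chA_apply _ _ hn, prodChar_apply]

lemma chA_pmul_mul {N : ℕ} (χ : DirichletCharacter ℂ N) (f g : ArithmeticFunction ℂ) :
    (chA χ).pmul (f * g) = (chA χ).pmul f * (chA χ).pmul g := by
  ext n
  rw [ArithmeticFunction.pmul_apply, ArithmeticFunction.mul_apply, ArithmeticFunction.mul_apply,
    Finset.mul_sum]
  refine Finset.sum_congr rfl fun x hx => ?_
  rw [Nat.mem_divisorsAntidiagonal] at hx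
  obtain ⟨hx, hn⟩ := hx
  have h1 : x.1 ≠ 0 := by rintro h; apply hn; rw [← hx, h, zero_mul]
  have h2 : x.2 ≠ 0 := by rintro h; apply hn; rw [← hx, h, mul_zero]
  rw [ArithmeticFunction.pmul_apply, ArithmeticFunction.pmul_apply, chA_apply _ _ hn,
    chA_apply _ _ h1, chA_apply _ _ h2, ← hx, Nat.cast_mul, map_mul]
  ring

/-- the coefficients of ζ(s)L(s,χ)L(s,ψ)L(s,χψ) -/
def quadC {N M : ℕ} (χ : DirichletCharacter ℂ N) (ψ : DirichletCharacter ℂ M) :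
    ArithmeticFunction ℂ := zetaMul χ * (chA ψ * chA (prodChar χ ψ))

lemma quadC_eq {N M : ℕ} (χ : DirichletCharacter ℂ N) (ψ : DirichletCharacter ℂ M) :
    quadC χ ψ = zetaMul χ * (chA ψ).pmul (zetaMul χ) := by
  rw [quadC, zetaMul_eq χ, chA_pmul_mul, chA_prod, ArithmeticFunction.pmul_zeta,
    ArithmeticFunction.pmul_comm (chA ψ)]

lemma quadC_eq' {N M : ℕ} (χ : DirichletCharacter ℂ N) (ψ : DirichletCharacter ℂ M) :
    quadC χ ψ = zetaMul ψ * (chA χ).pmul (zetaMul ψ) := by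
  rw [zetaMul_eq ψ, chA_pmul_mul,  ArithmeticFunction.pmul_zeta, ← chA_prod, quadC, zetaMul_eq]
  ring

lemma quadC_mult {N M : ℕ} (χ : DirichletCharacter ℂ N) (ψ : DirichletCharacter ℂ M) :
    (quadC χ ψ).IsMultiplicative :=
  (isMultiplicative_zetaMul χ).mul ((chA_mult _).mul (chA_mult _))

lemma chA_prime_pow {N : ℕ} (χ : DirichletCharacter ℂ N) {p : ℕ} (hp : p.Prime) (k : ℕ) :
    chA χ (p ^ k) = χ p ^ k := by
  rw [chA_apply _ _ (pow_ne_zero _ hp.ne_zero)]; simp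

lemma aux_nonneg {N M : ℕ} {χ : DirichletCharacter ℂ N} (hχ : χ^2 = 1) {ψ : DirichletCharacter ℂ M}
    {p : ℕ} (hp : p.Prime) (k : ℕ) (h : ∀ j, 0 ≤ ψ p ^ j * zetaMul χ (p ^ j)) :
    0 ≤ (zetaMul χ * (chA ψ).pmul (zetaMul χ)) (p ^ k) := by
  rw [ArithmeticFunction.mul_apply]
  refine Finset.sum_nonneg fun x hx => ?_
  rw [Nat.mem_divisorsAntidiagonal] at hx
  refine mul_nonneg (zetaMul_nonneg hχ _) ?_
  obtain ⟨j, _, hj⟩ := (Nat.dvd_prime_pow hp).mp (Dvd.intro_left _ hx.1)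
  rw [ArithmeticFunction.pmul_apply, hj, chA_prime_pow _ hp]
  exact h j

lemma quadC_nonneg {N M : ℕ} {χ : DirichletCharacter ℂ N} (hχ : χ^2 = 1)
    {ψ : DirichletCharacter ℂ M} (hψ : ψ^2 = 1) (n : ℕ) : 0 ≤ quadC χ ψ n := by
  rcases eq_or_ne n 0 with rfl | hn
  · simp
  rw [(quadC_mult χ ψ).multiplicative_factorization _ hn]
  refine Finset.prod_nonneg fun p hp ↦ ?_
  have hp := Nat.prime_of_mem_primeFactors hp
  set k := n.factorization p
  show 0 ≤ quadC χ ψ (p ^ k)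
  by_cases h1 : 0 ≤ ψ p
  · rw [quadC_eq]
    exact aux_nonneg hχ hp k fun j => mul_nonneg (pow_nonneg h1 _) (zetaMul_nonneg hχ _)
  by_cases h2 : 0 ≤ χ p
  · rw [quadC_eq']
    exact aux_nonneg hψ hp k fun j => mul_nonneg (pow_nonneg h2 _) (zetaMul_nonneg hψ _)
  have e1 : ψ p = -1 := by
    rcases MulChar.isQuadratic_iff_sq_eq_one.mpr hψ p with h | h | h
    · simp [h] at h1
    · simp [h] at h1
    · exact h
  have e2 : χ p = -1 := by
    rcases MulChar.isQuadratic_iff_sq_eq_one.mpr hχ p with h | h | h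
    · simp [h] at h2
    · simp [h] at h2
    · exact h
  rw [quadC_eq]
  refine aux_nonneg hχ hp k fun j => ?_
  rw [zetaMul_eq, ArithmeticFunction.coe_zeta_mul_apply, Nat.sum_divisors_prime_pow hp]
  simp_rw [chA_prime_pow _ hp, e1, e2, neg_one_geom_sum]
  split_ifs with h
  · simp
  · have : Even j := by simpa [Nat.even_add_one] using h
    simp [this.neg_one_pow]

lemma quadC_one {N M : ℕ} (χ : DirichletCharacter ℂ N) (ψ : DirichletCharacter ℂ M) :
    quadC χ ψ 1 = 1 := (quadC_mult χ ψ).map_one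

lemma zetaMul_LSeries {N : ℕ} [NeZero N] (χ : DirichletCharacter ℂ N) {s : ℂ} (hs : 1 < s.re) :
    LSeries (zetaMul χ) s = riemannZeta s * LFunction χ s := by
  have e : (fun n => (ArithmeticFunction.zeta : ArithmeticFunction ℂ) n) =
      fun n => ((ArithmeticFunction.zeta n : ℕ) : ℂ) := by
    ext n; rw [ArithmeticFunction.natCoe_apply]
  have hz : LSeriesSummable (fun n => (ArithmeticFunction.zeta : ArithmeticFunction ℂ) n) s := by
    rw [e]; exact ArithmeticFunction.LSeriesSummable_zeta_iff.mpr hs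
  have h := ArithmeticFunction.LSeries_mul' hz (chA_summable χ hs)
  rw [zetaMul_eq, h, chA_LSeries χ hs, e, ArithmeticFunction.LSeries_zeta_eq_riemannZeta hs]

lemma quadC_summable {N M : ℕ} (χ : DirichletCharacter ℂ N) (ψ : DirichletCharacter ℂ M) {s : ℂ}
    (hs : 1 < s.re) : LSeriesSummable (quadC χ ψ) s :=
  ArithmeticFunction.LSeriesSummable_mul (LSeriesSummable_zetaMul χ hs)
    (ArithmeticFunction.LSeriesSummable_mul (chA_summable _ hs) (chA_summable _ hs))

lemma quadC_LSeries {N M : ℕ} [NeZero N] [NeZero M]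
    (χ : DirichletCharacter ℂ N) (ψ : DirichletCharacter ℂ M) {s : ℂ}
    (hs : 1 < s.re) : LSeries (quadC χ ψ) s = riemannZeta s * LFunction χ s *
      (LFunction ψ s * LFunction (prodChar χ ψ) s) := by
  rw [quadC, ArithmeticFunction.LSeries_mul' (LSeriesSummable_zetaMul χ hs)
    (ArithmeticFunction.LSeriesSummable_mul (chA_summable _ hs) (chA_summable _ hs)),
    ArithmeticFunction.LSeries_mul' (chA_summable _ hs) (chA_summable _ hs),
    zetaMul_LSeries _ hs, chA_LSeries _ hs, chA_LSeries _ hs]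

lemma absc_le {a : ℕ → ℂ} (h : ∀ s : ℂ, 1 < s.re → LSeriesSummable a s) :
    LSeries.abscissaOfAbsConv a ≤ 1 := by
  apply LSeries.abscissaOfAbsConv_le_of_forall_lt_LSeriesSummable
  intro y hy
  exact h _ (by simpa using hy)

/-- `(s-1) ζ(s)` -/
def zetaOne : ℂ → ℂ := LFunctionTrivChar₁ 1

lemma zetaOne_diff : Differentiable ℂ zetaOne := differentiable_LFunctionTrivChar₁ 1

lemma zetaOne_one : zetaOne 1 = 1 := by simp [zetaOne, LFunctionTrivChar₁]

lemma zetaOne_eq {s : ℂ} (hs : s ≠ 1) : zetaOne s = (s - 1) * riemannZeta s := by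
  simp only [zetaOne, LFunctionTrivChar₁, Function.update_of_ne hs, LFunctionTrivChar]
  rw [LFunction_modOne_eq]

lemma zetaOne_bound : ∃ C : ℝ, 1 ≤ C ∧ ∀ s ∈ Metric.closedBall (2:ℂ) (3/2), ‖zetaOne s‖ ≤ C := by
  obtain ⟨C, hC⟩ := (isCompact_closedBall (2:ℂ) (3/2)).exists_bound_of_continuousOn
    zetaOne_diff.continuous.continuousOn
  exact ⟨max C 1, le_max_right _ _, fun s hs => (hC s hs).trans (le_max_left _ _)⟩

end

section

open DirichletCharacter Filter Asymptotics
open scoped ComplexOrder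

lemma real_of_entire {H : ℂ → ℂ} (hH : Differentiable ℂ H)
    (h : ∀ x : ℝ, 1 < x → (H x).im = 0) (x : ℝ) : (H x).im = 0 := by
  set G : ℂ → ℂ := fun z => (starRingEnd ℂ) (H ((starRingEnd ℂ) z)) with hG
  have hGd : Differentiable ℂ G := fun z => by
    have := (hH ((starRingEnd ℂ) z)).conj_conj
    rw [Complex.conj_conj] at this
    exact this
  have : H = G := by
    refine AnalyticOnNhd.eq_of_frequently_eq (z₀ := 2) (fun z _ => hH.analyticAt z)
      (fun z _ => hGd.analyticAt z) ?_
    have ht : Tendsto (fun x : ℝ => (x : ℂ)) (nhdsWithin 2 {(2:ℝ)}ᶜ) (nhdsWithin (2:ℂ) {(2:ℂ)}ᶜ) := by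
      apply tendsto_nhdsWithin_of_tendsto_nhds_of_eventually_within
      · have : Tendsto (fun x : ℝ => (x : ℂ)) (nhds 2) (nhds ((2:ℝ):ℂ)) :=
          Complex.continuous_ofReal.continuousAt
        simpa using this.mono_left nhdsWithin_le_nhds
      · filter_upwards [self_mem_nhdsWithin] with x hx
        intro h
        apply hx
        have h' : (x:ℂ) = 2 := h
        exact_mod_cast h'
    refine ht.frequently (Eventually.frequently ?_)
    have : Set.Ioi (1:ℝ) ∈ nhdsWithin (2:ℝ) {(2:ℝ)}ᶜ :=
      mem_nhdsWithin_of_mem_nhds (Ioi_mem_nhds (by norm_num))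
    filter_upwards [this] with x hx
    simp only [hG, Complex.conj_ofReal]
    exact (Complex.conj_eq_iff_im.mpr (h x hx)).symm
  have h2 : H x = (starRingEnd ℂ) (H x) := by
    conv_lhs => rw [this]
    simp [hG]
  exact Complex.conj_eq_iff_im.mp h2.symm

lemma single_est : ∃ C : ℝ, 1 ≤ C ∧ ∀ (N : ℕ) [NeZero N] (χ : DirichletCharacter ℂ N), χ^2 = 1 → χ ≠ 1 →
    ∀ δ : ℝ, 0 < δ → δ ≤ 1/8 → 0 ≤ (zetaOne ((1-δ:ℝ):ℂ) * LFunction χ ((1-δ:ℝ):ℂ)).re →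
    δ/6*(C*N)^(-(4*δ)) ≤ ‖LFunction χ 1‖ := by
  obtain ⟨C, hC1, hC⟩ := zetaOne_bound
  refine ⟨32*(C*7), by linarith, fun N _ χ hχ2 hχ δ hδ hδ' hpos => ?_⟩
  have hN : (1:ℝ) ≤ N := by exact_mod_cast NeZero.pos N
  have := estermann (a := zetaMul χ) (H := fun s => zetaOne s * LFunction χ s) (B := C * (7*N))
    (fun n => zetaMul_nonneg hχ2 n) (le_of_eq (isMultiplicative_zetaMul χ).map_one.symm)
    (absc_le fun s hs => LSeriesSummable_zetaMul χ hs)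
    (zetaOne_diff.mul (differentiable_LFunction hχ))
    (fun s hs => by
      have : s ≠ 1 := by rintro rfl; simp at hs
      rw [zetaMul_LSeries χ hs, zetaOne_eq this]; ring) (by nlinarith)
    (fun s hs => by
      rw [norm_mul]
      exact mul_le_mul (hC s hs) (LFunction_ball_bound hχ hs) (norm_nonneg _) (by linarith))
    hδ hδ' hpos
  rw [show 32*(C*7)*(N:ℝ) = 32 * (C * (7*N)) by ring]
  refine this.trans ?_
  simp only [zetaOne_one, one_mul]
  exact Complex.re_le_norm _

lemma double_est : ∃ C : ℝ, 1 ≤ C ∧ ∀ (N : ℕ) [NeZero N] (χ : DirichletCharacter ℂ N)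
    (M : ℕ) [NeZero M] (ψ : DirichletCharacter ℂ M), χ^2 = 1 → χ ≠ 1 → ψ^2 = 1 → ψ ≠ 1 →
    prodChar χ ψ ≠ 1 →
    ∀ δ : ℝ, 0 < δ → δ ≤ 1/8 → LFunction χ ((1-δ:ℝ):ℂ) = 0 →
    δ/6*(C*(N:ℝ)^2*(M:ℝ)^2)^(-(4*δ)) ≤ ‖LFunction χ 1‖ * (‖LFunction ψ 1‖ *
      ‖LFunction (prodChar χ ψ) 1‖) := by
  obtain ⟨C, hC1, hC⟩ := zetaOne_bound
  refine ⟨32*(C*7*7*7), by linarith, fun N _ χ M _ ψ hχ2 hχ hψ2 hψ hp δ hδ hδ' hpos => ?_⟩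
  have hN : (1:ℝ) ≤ N := by exact_mod_cast NeZero.pos N
  have hM : (1:ℝ) ≤ M := by exact_mod_cast NeZero.pos M
  have := estermann (a := quadC χ ψ) (H := fun s => zetaOne s * (LFunction χ s *
      (LFunction ψ s * LFunction (prodChar χ ψ) s))) (B := C * ((7*N) * ((7*M)*(7*(N*M:ℕ)))))
    (fun n => quadC_nonneg hχ2 hψ2 n) (le_of_eq (quadC_one χ ψ).symm)
    (absc_le fun s hs => quadC_summable χ ψ hs)
    (zetaOne_diff.mul ((differentiable_LFunction hχ).mul ((differentiable_LFunction hψ).mul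
      (differentiable_LFunction hp))))
    (fun s hs => by
      have : s ≠ 1 := by rintro rfl; simp at hs
      rw [quadC_LSeries χ ψ hs, zetaOne_eq this]; ring)
    (by
      have h1 : (1:ℝ) ≤ (N*M:ℕ) := by exact_mod_cast NeZero.pos (N*M)
      have h2 : (1:ℝ) ≤ (7*M)*(7*(N*M:ℕ)) := by nlinarith
      have h3 : (1:ℝ) ≤ (7*N) * ((7*M)*(7*(N*M:ℕ))) := by nlinarith
      nlinarith)
    (fun s hs => by
      rw [norm_mul, norm_mul, norm_mul]
      have h1 := hC s hs
      have h2 := LFunction_ball_bound hχ hs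
      have h3 := LFunction_ball_bound hψ hs
      have h4 := LFunction_ball_bound hp hs
      gcongr)
    hδ hδ' (by rw [hpos, zero_mul, mul_zero, Complex.zero_re])
  rw [show 32*(C*7*7*7)*(N:ℝ)^2*(M:ℝ)^2 = 32 * (C * ((7*N) * ((7*M)*(7*(N*M:ℕ))))) by
    push_cast; ring]
  refine this.trans ?_
  simp only [zetaOne_one, one_mul]
  refine (Complex.re_le_norm _).trans ?_
  rw [norm_mul, norm_mul]

lemma zero_of_prod_eq_one {N M : ℕ} [NeZero N] [NeZero M] {χ : DirichletCharacter ℂ N}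
    {ψ : DirichletCharacter ℂ M} (hχ2 : χ^2 = 1)
    (h : prodChar χ ψ = 1) {β : ℝ} (hβ0 : 0 < β) (hβ : β < 1) (hz : LFunction χ β = 0) :
    LFunction ψ β = 0 := by
  have hβ1 : (β:ℂ) ≠ 1 := by exact_mod_cast hβ.ne
  have h1 := LFunction_changeLevel (dvd_mul_right N M) χ (s := β) (Or.inr hβ1)
  have h2 := LFunction_changeLevel (dvd_mul_left M N) ψ (s := β) (Or.inr hβ1)
  have e : changeLevel (dvd_mul_left M N) ψ = changeLevel (dvd_mul_right N M) χ := by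
    have h3 : changeLevel (dvd_mul_right N M) χ * changeLevel (dvd_mul_right N M) χ = 1 := by
      rw [← map_mul, ← pow_two, hχ2, map_one]
    exact mul_left_cancel (h.trans h3.symm)
  rw [e, h1, hz, zero_mul] at h2
  rcases mul_eq_zero.mp h2.symm with h4 | h4
  · exact h4
  · exfalso
    rw [Finset.prod_eq_zero_iff] at h4
    obtain ⟨p, hp, h5⟩ := h4
    have hp := Nat.prime_of_mem_primeFactors hp
    have h6 : ‖ψ p * (p:ℂ)^(-(β:ℂ))‖ < 1 := by
      rw [norm_mul, Complex.norm_natCast_cpow_of_pos hp.pos]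
      have : (p:ℝ)^(-(β:ℂ)).re < 1 := by
        apply Real.rpow_lt_one_of_one_lt_of_neg
        · exact_mod_cast hp.one_lt
        · simpa using hβ0
      calc _ ≤ 1 * (p:ℝ)^(-(β:ℂ)).re := by
            gcongr; exact ψ.norm_le_one _
        _ < 1 := by linarith
    rw [← sub_eq_zero.mp h5] at h6
    simp at h6

lemma pos_of_no_zero {N : ℕ} [NeZero N] {χ : DirichletCharacter ℂ N} (hχ2 : χ^2 = 1) (hχ : χ ≠ 1)
    {δ : ℝ} (hδ : 0 < δ) (hz : ∀ x : ℝ, 1 - δ ≤ x → x ≤ 1 → zetaOne x ≠ 0)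
    (hL : ∀ x : ℝ, 1 - δ ≤ x → x < 1 → LFunction χ x ≠ 0) :
    0 ≤ (zetaOne ((1-δ:ℝ):ℂ) * LFunction χ ((1-δ:ℝ):ℂ)).re := by
  set H : ℂ → ℂ := fun s => zetaOne s * LFunction χ s with hHdef
  have hH : Differentiable ℂ H := zetaOne_diff.mul (differentiable_LFunction hχ)
  have hpos : ∀ x : ℝ, 1 < x → 0 ≤ H x := by
    intro x hx
    have h1 : (x:ℂ) ≠ 1 := by exact_mod_cast hx.ne'
    have h2 : H x = ((x - 1 : ℝ):ℂ) * LSeries (zetaMul χ) x := by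
      rw [zetaMul_LSeries χ (by simpa using hx), hHdef]
      simp only
      rw [zetaOne_eq h1]; push_cast; ring
    rw [h2]
    refine mul_nonneg ?_ ?_
    · exact_mod_cast (by linarith : 0 ≤ x - 1)
    · exact tsum_nonneg fun n => LSeries.term_nonneg (zetaMul_nonneg hχ2 n) x
  have him : ∀ x : ℝ, (H x).im = 0 := real_of_entire hH fun x hx =>
    (Complex.le_def.mp (hpos x hx)).2.symm
  by_contra hneg
  push Not at hneg
  have hc : Continuous fun x : ℝ => (H x).re :=
    Complex.continuous_re.comp (hH.continuous.comp Complex.continuous_ofReal)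
  have h2 : 0 ≤ (H (2:ℝ)).re := (Complex.le_def.mp (hpos 2 (by norm_num))).1
  obtain ⟨x, hx, hx0⟩ := intermediate_value_Icc (by linarith : 1 - δ ≤ 2) hc.continuousOn
    ⟨hneg.le, h2⟩
  have hx0' : H x = 0 := Complex.ext hx0 (him x)
  rcases mul_eq_zero.mp hx0' with h | h
  · rcases le_or_gt x 1 with h1 | h1
    · exact hz x hx.1 h1 h
    · have h1' : (x:ℂ) ≠ 1 := by exact_mod_cast h1.ne'
      rw [zetaOne_eq h1'] at h
      rcases mul_eq_zero.mp h with h | h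
      · exact h1' (sub_eq_zero.mp h)
      · exact riemannZeta_ne_zero_of_one_le_re (by simpa using h1.le) h
  · rcases lt_or_ge x 1 with h1 | h1
    · exact hL x hx.1 h1 h
    · exact LFunction_ne_zero_of_one_le_re χ (Or.inl hχ) (by simpa using h1) h

theorem siegel (ε : ℝ) (hε : 0 < ε) : ∃ c : ℝ, 0 < c ∧ ∀ (N : ℕ) [NeZero N]
    (χ : DirichletCharacter ℂ N), χ^2 = 1 → χ ≠ 1 → c * (N:ℝ)^(-ε) ≤ ‖LFunction χ 1‖ := by
  obtain ⟨C, hC1, hC⟩ := single_est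
  obtain ⟨C', hC1', hC'⟩ := double_est
  obtain ⟨η, hη, hball⟩ : ∃ η > 0, ∀ z : ℂ, dist z 1 < η → zetaOne z ≠ 0 := by
    have : ∀ᶠ z in nhds (1:ℂ), zetaOne z ≠ 0 :=
      zetaOne_diff.continuous.continuousAt.eventually_ne (by rw [zetaOne_one]; exact one_ne_zero)
    exact Metric.eventually_nhds_iff.mp this
  set δ₀ : ℝ := min (1/8) (min (η/2) (ε/16)) with hδ₀
  have d0 : 0 < δ₀ := by positivity
  have d1 : δ₀ ≤ 1/8 := min_le_left _ _
  have d2 : δ₀ ≤ η/2 := (min_le_right _ _).trans (min_le_left _ _)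
  have d3 : δ₀ ≤ ε/16 := (min_le_right _ _).trans (min_le_right _ _)
  have conv1 : ∀ (N : ℕ) [NeZero N] (δ : ℝ), 0 < δ → δ ≤ δ₀ →
      δ/6*C^(-(4*δ)) * (N:ℝ)^(-ε) ≤ δ/6*(C*N)^(-(4*δ)) := by
    intro N _ δ h1 h2
    have hN : (1:ℝ) ≤ N := by exact_mod_cast NeZero.pos N
    rw [Real.mul_rpow (by linarith) (by linarith), mul_assoc]
    gcongr
    linarith
  by_cases hA : ∃ (N₁ : ℕ) (_ : NeZero N₁) (χ₁ : DirichletCharacter ℂ N₁) (β : ℝ), χ₁^2 = 1 ∧ χ₁ ≠ 1 ∧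
      1 - δ₀ ≤ β ∧ β < 1 ∧ LFunction χ₁ β = 0
  · obtain ⟨N₁, _, χ₁, β, h12, h1, hb1, hb2, hz⟩ := hA
    have hN₁ : (1:ℝ) ≤ N₁ := by exact_mod_cast NeZero.pos N₁
    set δ := 1 - β with hδdef
    have hβ : β = 1 - δ := by ring
    have hδ : 0 < δ := by linarith
    have hδ' : δ ≤ δ₀ := by linarith
    set θ : ℝ := min (ε/2) 1 with hθ
    have t0 : 0 < θ := by positivity
    have t1 : θ ≤ 1 := min_le_right _ _
    have t2 : θ ≤ ε/2 := min_le_left _ _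
    refine ⟨min (δ/6*C^(-(4*δ))) (δ/6*(C' * (N₁:ℝ)^2)^(-(4*δ)) / N₁ * θ / (N₁:ℝ)^θ), by positivity,
      fun N _ χ hχ2 hχ => ?_⟩
    have hN : (1:ℝ) ≤ N := by exact_mod_cast NeZero.pos N
    by_cases hp : prodChar χ₁ χ = 1
    · have hz2 := zero_of_prod_eq_one h12 hp (by linarith) hb2 hz
      have := hC N χ hχ2 hχ δ hδ (by linarith) (by rw [← hβ, hz2]; simp)
      refine le_trans ?_ ((conv1 N δ hδ hδ').trans this)
      gcongr
      exact min_le_left _ _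
    · have := hC' N₁ χ₁ N χ h12 h1 hχ2 hχ hp δ hδ (by linarith) (by rw [← hβ, hz])
      have b1 : ‖LFunction χ₁ 1‖ ≤ N₁ := by simpa using LFunction_one_bound h1 one_pos le_rfl
      have b2 : ‖LFunction (prodChar χ₁ χ) 1‖ ≤ (N₁:ℝ)^θ * (N:ℝ)^θ / θ := by
        have := LFunction_one_bound hp t0 t1
        rwa [Nat.cast_mul, Real.mul_rpow (by linarith) (by linarith)] at this
      set L := ‖LFunction χ 1‖ with hLdef
      have e1 : δ/6*(C'*(N₁:ℝ)^2*(N:ℝ)^2)^(-(4*δ)) ≤ N₁ * (L * ((N₁:ℝ)^θ * (N:ℝ)^θ / θ)) := by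
        refine this.trans ?_
        gcongr
      have e2 : δ/6*(C'*(N₁:ℝ)^2)^(-(4*δ)) * (N:ℝ)^(-(8*δ)) ≤ N₁ * (L * ((N₁:ℝ)^θ * (N:ℝ)^θ / θ)) := by
        refine le_of_eq_of_le ?_ e1
        rw [Real.mul_rpow (x := C'*(N₁:ℝ)^2) (by positivity) (by positivity), ← Real.rpow_natCast (N:ℝ) 2, ← Real.rpow_mul (by linarith)]
        rw [mul_assoc]; congr 3; push_cast; ring
      have e3 : (δ/6*(C' * (N₁:ℝ)^2)^(-(4*δ)) / N₁ * θ / (N₁:ℝ)^θ) * ((N:ℝ)^(-(8*δ)) * (N:ℝ)^(-θ)) ≤ L := by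
        have p1 : 0 < (N₁:ℝ)^θ := by positivity
        have p2 : 0 < (N:ℝ)^θ := by positivity
        rw [Real.rpow_neg (by linarith) θ]
        have : (δ/6*(C' * (N₁:ℝ)^2)^(-(4*δ)) / N₁ * θ / (N₁:ℝ)^θ) * ((N:ℝ)^(-(8*δ)) * ((N:ℝ)^θ)⁻¹)
          = (δ/6*(C'*(N₁:ℝ)^2)^(-(4*δ)) * (N:ℝ)^(-(8*δ))) * (θ / (N₁ * (N₁:ℝ)^θ * (N:ℝ)^θ)) := by
          field_simp
        rw [this]
        calc _ ≤ (N₁ * (L * ((N₁:ℝ)^θ * (N:ℝ)^θ / θ))) * (θ / (N₁ * (N₁:ℝ)^θ * (N:ℝ)^θ)) := by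
              gcongr
          _ = L := by field_simp
      refine le_trans ?_ e3
      rw [← Real.rpow_add (by linarith)]
      gcongr
      · exact min_le_right _ _
      · linarith
  · push Not at hA
    refine ⟨δ₀/6*C^(-(4*δ₀)), by positivity, fun N _ χ hχ2 hχ => ?_⟩
    refine (conv1 N δ₀ d0 le_rfl).trans (hC N χ hχ2 hχ δ₀ d0 d1 ?_)
    apply pos_of_no_zero hχ2 hχ d0
    · intro x h1 h2
      apply hball
      rw [show (1:ℂ) = ((1:ℝ):ℂ) by simp, Complex.dist_eq, ← Complex.ofReal_sub, Complex.norm_real,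
        Real.norm_eq_abs, abs_lt]
      constructor <;> linarith
    · intro x h1 h2
      exact hA N ‹_› χ x hχ2 hχ h1 h2

end

section

lemma succ_le_rpow (ε : ℝ) (hε : 0 < ε) (k : ℕ) {p : ℝ} (hp : 2 ≤ p) :
    ((k:ℝ) + 1) ≤ max 1 (1 / (ε * Real.log 2)) * (p ^ k) ^ ε := by
  have hl : 0 < ε * Real.log 2 := mul_pos hε (Real.log_pos (by norm_num))
  have h1 : (1 + k * (ε * Real.log 2)) ≤ (p ^ k) ^ ε := by
    calc (1 + k * (ε * Real.log 2)) ≤ Real.exp (k * (ε * Real.log 2)) := by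
          have := Real.add_one_le_exp (k * (ε * Real.log 2)); linarith
      _ = ((2:ℝ) ^ k) ^ ε := by
          rw [Real.rpow_def_of_pos (by positivity), Real.log_pow]; congr 1; ring
      _ ≤ (p ^ k) ^ ε := by gcongr
  set K := max 1 (1 / (ε * Real.log 2))
  have hK1 : 1 ≤ K := le_max_left _ _
  have hK2 : 1 ≤ K * (ε * Real.log 2) := by
    have : 1 / (ε * Real.log 2) ≤ K := le_max_right _ _
    rwa [div_le_iff₀ hl] at this
  calc ((k:ℝ) + 1) ≤ K * (1 + k * (ε * Real.log 2)) := by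
        have : (k:ℝ) * 1 ≤ k * (K * (ε * Real.log 2)) := by gcongr
        nlinarith
    _ ≤ _ := by gcongr

theorem divisor_bound (ε : ℝ) (hε : 0 < ε) : ∃ C : ℝ, 1 ≤ C ∧ ∀ m : ℕ, 
    ((m.divisors.card : ℕ) : ℝ) ≤ C * (m:ℝ)^ε := by
  set K := max 1 (1 / (ε * Real.log 2)) with hK
  have hK1 : 1 ≤ K := le_max_left _ _
  obtain ⟨P, hP⟩ := exists_nat_ge ((2:ℝ)^(1/ε))
  refine ⟨K^P, one_le_pow₀ hK1, fun m => ?_⟩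
  rcases eq_or_ne m 0 with rfl | hm
  · simp; positivity
  rw [Nat.card_divisors hm]
  have hmp : (m:ℝ)^ε = ∏ p ∈ m.primeFactors, (((p:ℝ)^(m.factorization p))^ε) := by
    rw [Real.finsetProd_rpow _ _ (fun i _ => by positivity)]
    congr 1
    have := Nat.prod_factorization_pow_eq_self hm
    conv_lhs => rw [← this]
    rw [Finsupp.prod]; push_cast; rfl
  rw [hmp]
  push_cast
  have step : ∀ p ∈ m.primeFactors, ((m.factorization p : ℝ) + 1) ≤
      (if p < P then K else 1) * (((p:ℝ)^(m.factorization p))^ε) := by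
    intro p hp
    have hp := Nat.prime_of_mem_primeFactors hp
    have hp2 : (2:ℝ) ≤ p := by exact_mod_cast hp.two_le
    split_ifs with h
    · exact succ_le_rpow ε hε _ hp2
    · push Not at h
      have h2 : (2:ℝ) ≤ (p:ℝ)^ε := by
        calc (2:ℝ) = ((2:ℝ)^(1/ε))^ε := by
              rw [← Real.rpow_mul (by norm_num), one_div_mul_cancel hε.ne', Real.rpow_one]
          _ ≤ (p:ℝ)^ε := by
              gcongr; exact hP.trans (by exact_mod_cast h)
      rw [one_mul, ← Real.rpow_natCast, ← Real.rpow_mul (by positivity), mul_comm,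
        Real.rpow_mul (by positivity), Real.rpow_natCast]
      calc ((m.factorization p : ℝ) + 1) ≤ 2^(m.factorization p) := by
            exact_mod_cast Nat.lt_two_pow_self
        _ ≤ _ := by gcongr
  refine (Finset.prod_le_prod (fun _ _ => by positivity) step).trans ?_
  rw [Finset.prod_mul_distrib]
  gcongr
  rw [Finset.prod_ite, Finset.prod_const, Finset.prod_const_one, mul_one]
  apply pow_le_pow_right₀ hK1
  calc _ ≤ (Finset.range P).card := Finset.card_le_card (fun x hx => by
        simp at hx ⊢; exact hx.2)
    _ = P := by simp

end

section

/-- The order `ℤ[ω]`, `ω² = nω + 1`. -/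
abbrev QS (n : ℕ) := QuadraticAlgebra ℤ 1 (n:ℤ)

/-- `√(n²+4)` -/
def rD (n : ℕ) : ℝ := Real.sqrt ((n:ℝ)^2 + 4)

lemma rD_sq (n : ℕ) : rD n ^ 2 = (n:ℝ)^2 + 4 := Real.sq_sqrt (by positivity)
lemma rD_pos (n : ℕ) : 0 < rD n := Real.sqrt_pos.mpr (by positivity)
lemma lt_rD (n : ℕ) : (n:ℝ) < rD n := by
  apply Real.lt_sqrt_of_sq_lt; linarith
lemma rD_le (n : ℕ) : rD n ≤ n + 2 := by
  apply Real.sqrt_le_iff.mpr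
  constructor
  · positivity
  · nlinarith [(Nat.cast_nonneg n : (0:ℝ) ≤ n)]

/-- the fundamental unit -/
def ep (n : ℕ) : ℝ := (n + rD n) / 2
/-- its conjugate -/
def ep' (n : ℕ) : ℝ := (n - rD n) / 2

lemma ep_mul (n : ℕ) : ep n * ep' n = -1 := by
  have := rD_sq n
  simp only [ep, ep']; nlinarith
lemma ep_add (n : ℕ) : ep n + ep' n = n := by simp only [ep, ep']; ring
lemma ep_sq (n : ℕ) : ep n * ep n = 1 + n * ep n := by
  have := rD_sq n
  simp only [ep]; nlinarith
lemma ep'_sq (n : ℕ) : ep' n * ep' n = 1 + n * ep' n := by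
  have := rD_sq n
  simp only [ep']; nlinarith
lemma ep_pos (n : ℕ) : 0 < ep n := by
  have := rD_pos n
  simp only [ep]; positivity
lemma ep_sub (n : ℕ) : ep n - ep' n = rD n := by simp only [ep, ep']; ring
lemma one_lt_ep {n : ℕ} (hn : 1 ≤ n) : 1 < ep n := by
  have h := ep_sq n
  have h2 := ep_pos n
  have h3 : (1:ℝ) ≤ n := by exact_mod_cast hn
  nlinarith
lemma ep_le (n : ℕ) : ep n ≤ n + 1 := by
  have := rD_le n
  simp only [ep]; linarith

lemma not_sq {n : ℕ} (hn : 1 ≤ n) (r : ℕ) : n^2 + 4 ≠ r^2 := by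
  intro h
  have h1 : n < r := by nlinarith
  obtain ⟨k, rfl⟩ : ∃ k, r = n + 1 + k := ⟨r - (n+1), by omega⟩
  rcases k with _ | k
  · ring_nf at h; omega
  · nlinarith

lemma not_isSquare {n : ℕ} (hn : 1 ≤ n) : ¬ IsSquare ((n:ℤ)^2 + 4) := by
  rintro ⟨r, hr⟩
  apply not_sq hn r.natAbs
  zify
  rw [sq_abs, hr]; ring

lemma irr_rD {n : ℕ} (hn : 1 ≤ n) : Irrational (rD n) := by
  have := irrational_sqrt_intCast_iff_of_nonneg (z := (n:ℤ)^2+4) (by positivity) |>.mpr (not_isSquare hn)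
  rw [rD]
  push_cast at this
  exact this

lemma int_lin_eq_zero {n : ℕ} (hn : 1 ≤ n) {x y : ℤ} (h : (x:ℝ) + y * ep n = 0) : x = 0 ∧ y = 0 := by
  have hy : y = 0 := by
    by_contra hy
    apply irr_rD hn
    refine ⟨-(2 * x + n * y) / y, ?_⟩
    push_cast
    have hy' : (y:ℝ) ≠ 0 := by exact_mod_cast hy
    rw [div_eq_iff hy']
    simp only [ep] at h
    linear_combination (-2) * h
  subst hy
  simp at h
  exact ⟨h, rfl⟩

namespace QS
variable {n : ℕ}

/-- first real embedding -/
def s1 (z : QS n) : ℝ := z.re + z.im * ep n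
/-- second real embedding -/
def s2 (z : QS n) : ℝ := z.re + z.im * ep' n

lemma s1_mul (z w : QS n) : s1 (z * w) = s1 z * s1 w := by
  have := ep_sq n
  simp only [s1, QuadraticAlgebra.re_mul, QuadraticAlgebra.im_mul]
  push_cast
  linear_combination (-(z.im * w.im : ℝ)) * this
lemma s2_mul (z w : QS n) : s2 (z * w) = s2 z * s2 w := by
  have := ep'_sq n
  simp only [s2, QuadraticAlgebra.re_mul, QuadraticAlgebra.im_mul]
  push_cast
  linear_combination (-(z.im * w.im : ℝ)) * this

lemma s1_eq_zero (hn : 1 ≤ n) {z : QS n} (h : s1 z = 0) : z = 0 := by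
  obtain ⟨h1, h2⟩ := int_lin_eq_zero hn h
  exact QuadraticAlgebra.ext h1 h2

lemma s1_mul_s2 (z : QS n) : s1 z * s2 z = (QuadraticAlgebra.norm z : ℤ) := by
  rw [QuadraticAlgebra.norm_def]
  simp only [s1, s2]
  push_cast
  linear_combination (z.re * z.im : ℝ) * ep_add n + (z.im^2 : ℝ) * ep_mul n

lemma norm_eq_s1 (z : QS n) : s2 z = s1 (star z) := by
  simp only [s1, s2, QuadraticAlgebra.re_star, QuadraticAlgebra.im_star]
  push_cast
  linear_combination (z.im : ℝ) * ep_add n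

lemma s2_eq_zero (hn : 1 ≤ n) {z : QS n} (h : s2 z = 0) : z = 0 := by
  rw [norm_eq_s1] at h
  exact star_eq_zero.mp (s1_eq_zero hn h)

lemma norm_eq_zero (hn : 1 ≤ n) {z : QS n} (h : QuadraticAlgebra.norm z = 0) : z = 0 := by
  have := s1_mul_s2 z
  rw [h, Int.cast_zero] at this
  rcases mul_eq_zero.mp this with h | h
  · exact s1_eq_zero hn h
  · exact s2_eq_zero hn h

lemma re_one' : (1 : QS n).re = 1 := rfl
lemma im_one' : (1 : QS n).im = 0 := rfl

lemma isDomain (hn : 1 ≤ n) : IsDomain (QS n) := by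
  have : NoZeroDivisors (QS n) := ⟨fun {a b} h => by
    have h2 : s1 a * s1 b = 0 := by rw [← s1_mul, h]; simp [s1]
    rcases mul_eq_zero.mp h2 with h | h
    · exact Or.inl (s1_eq_zero hn h)
    · exact Or.inr (s1_eq_zero hn h)⟩
  have : Nontrivial (QS n) := ⟨0, 1, fun h => by
    have := congrArg QuadraticAlgebra.re h
    rw [re_one'] at this; simp at this⟩
  exact NoZeroDivisors.to_isDomain _

/-- ring hom to ℂ -/
def toC (n : ℕ) : QS n →+* ℂ where
  toFun z := ((s1 z : ℝ) : ℂ)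
  map_one' := by simp [s1, re_one', im_one']
  map_zero' := by simp [s1]
  map_mul' z w := by rw [s1_mul]; push_cast; rfl
  map_add' z w := by
    have : s1 (z + w) = s1 z + s1 w := by simp [s1]; ring
    rw [this]; push_cast; rfl

lemma toC_inj (hn : 1 ≤ n) : Function.Injective (toC n) := by
  rw [injective_iff_map_eq_zero]
  intro z hz
  have hz' : ((s1 z : ℝ) : ℂ) = 0 := hz
  exact s1_eq_zero hn (by exact_mod_cast hz')

lemma omegaD_eq (n : ℕ) : ∃ m : ℤ, omegaD ((n:ℤ)^2 + 4) = ((ep n : ℝ) : ℂ) + m := by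
  have : Even ((n:ℤ)^2 - n) := by
    rw [show (n:ℤ)^2 - n = (n-1) * ((n-1) + 1) by ring]; exact Int.even_mul_succ_self _
  obtain ⟨m, hm⟩ := this
  refine ⟨m + 2, ?_⟩
  have hm' : (n:ℂ)^2 - n = m + m := by exact_mod_cast hm
  rw [omegaD, sqrtD, if_pos (by positivity)]
  have : Real.sqrt (((n:ℤ)^2+4 : ℤ) : ℝ) = rD n := by rw [rD]; push_cast; rfl
  rw [this, ep]
  push_cast
  linear_combination hm' / 2

lemma range_toC (n : ℕ) : (toC n).range = QOrder ((n:ℤ)^2 + 4) := by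
  obtain ⟨m, hm⟩ := omegaD_eq n
  rw [QOrder]
  apply le_antisymm
  · rintro _ ⟨z, rfl⟩
    have h1 : omegaD ((n:ℤ)^2 + 4) ∈ Subring.closure {omegaD ((n:ℤ)^2 + 4)} :=
      Subring.subset_closure rfl
    have h2 : ((ep n : ℝ) : ℂ) ∈ Subring.closure {omegaD ((n:ℤ)^2 + 4)} := by
      have := sub_mem h1 (intCast_mem (Subring.closure {omegaD ((n:ℤ)^2 + 4)}) m)
      rwa [hm, add_sub_cancel_right, ← hm] at this
    show ((s1 z : ℝ) : ℂ) ∈ _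
    rw [s1]
    push_cast
    exact add_mem (intCast_mem _ _) (mul_mem (intCast_mem _ _) h2)
  · rw [Subring.closure_le, Set.singleton_subset_iff]
    refine ⟨⟨m, 1⟩, ?_⟩
    show ((s1 _ : ℝ) : ℂ) = _
    rw [hm, s1]; push_cast; ring

/-- the ring isomorphism -/
def equivQ (hn : 1 ≤ n) : QS n ≃+* QOrder ((n:ℤ)^2 + 4) :=
  (RingEquiv.ofBijective (toC n).rangeRestrict
    ⟨fun _ _ h => toC_inj hn (congrArg Subtype.val h), (toC n).rangeRestrict_surjective⟩).trans
    (RingEquiv.subringCongr (range_toC n))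

lemma classNumber_eq (hn : 1 ≤ n) : letI := isDomain hn
    classNumber ((n:ℤ)^2 + 4) = Nat.card (ClassGroup (QS n)) := by
  letI := isDomain hn
  exact (Nat.card_congr (ClassGroup.mulEquiv (equivQ hn)).toEquiv).symm

end QS

end

section

namespace QS
variable {n : ℕ}

/-- the lattice ideal `ℤ a + ℤ (k + ω)` -/
def latI (a k : ℤ) (h : a ∣ k^2 + n*k - 1) : Ideal (QS n) where
  carrier := {z | a ∣ z.re - k * z.im}
  add_mem' {z w} hz hw := by
    simp only [Set.mem_ofPred_eq, QuadraticAlgebra.re_add, QuadraticAlgebra.im_add] at *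
    have := dvd_add hz hw
    rwa [show z.re + w.re - k * (z.im + w.im) = (z.re - k*z.im) + (w.re - k*w.im) by ring]
  zero_mem' := by simp
  smul_mem' c z hz := by
    simp only [Set.mem_ofPred_eq, smul_eq_mul, QuadraticAlgebra.re_mul, QuadraticAlgebra.im_mul] at *
    rw [show c.re * z.re + 1 * c.im * z.im - k * (c.re * z.im + c.im * z.re + n * c.im * z.im) =
      (c.re - c.im * k) * (z.re - k * z.im) - c.im * z.im * (k^2+n*k-1) by ring]
    exact dvd_sub (Dvd.dvd.mul_left hz _) (Dvd.dvd.mul_left h _)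

lemma mem_latI {a k : ℤ} {h : a ∣ k^2 + n*k - 1} {z : QS n} :
    z ∈ latI a k h ↔ a ∣ z.re - k * z.im := Iff.rfl

lemma exists_latI (hn : 1 ≤ n) (I : Ideal (QS n)) (hI : I ≠ ⊥) : ∃ (k : ℤ) (a : ℕ), 0 < a ∧
    (2*k+n)^2 < (n:ℤ)^2+4 ∧ ∃ h : (a:ℤ) ∣ k^2 + n*k - 1, ∃ α β : QS n, α ≠ 0 ∧ β ≠ 0 ∧
    Ideal.span {α} * I = Ideal.span {β} * latI (a:ℤ) k h := by
  classical
  have hex : ∃ m : ℕ, ∃ γ ∈ I, γ ≠ 0 ∧ (QuadraticAlgebra.norm γ).natAbs = m := by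
    obtain ⟨γ, h1, h2⟩ := Submodule.exists_mem_ne_zero_of_ne_bot hI
    exact ⟨_, γ, h1, h2, rfl⟩
  obtain ⟨γ, hγI, hγ0, hγM⟩ := Nat.find_spec hex
  have hmin : ∀ x ∈ I, x ≠ 0 → Nat.find hex ≤ (QuadraticAlgebra.norm x).natAbs :=
    fun x hx hx0 => Nat.find_min' hex ⟨x, hx, hx0, rfl⟩
  set M : ℕ := Nat.find hex with hM
  have hMpos : 0 < M := by
    rw [← hγM, Int.natAbs_pos]
    exact fun h => hγ0 (norm_eq_zero hn h)
  set I' := Ideal.span {star γ} * I with hI'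
  have hsγ0 : star γ ≠ 0 := fun h => hγ0 (star_eq_zero.mp h)
  have hnstar : ∀ z : QS n, QuadraticAlgebra.norm (star z) = QuadraticAlgebra.norm z := by
    intro z
    simp only [QuadraticAlgebra.norm_def, QuadraticAlgebra.re_star, QuadraticAlgebra.im_star]
    ring
  have hbig : ∀ z ∈ I', z ≠ 0 → (M:ℤ)^2 ≤ |QuadraticAlgebra.norm z| := by
    intro z hz hz0
    obtain ⟨x, hx, rfl⟩ := Ideal.mem_span_singleton_mul.mp hz
    have hx0 : x ≠ 0 := by rintro rfl; simp at hz0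
    have := hmin x hx hx0
    rw [map_mul, hnstar, abs_mul, pow_two, Int.abs_eq_natAbs, Int.abs_eq_natAbs, hγM]
    gcongr
  have hMI : (⟨(M:ℤ), 0⟩ : QS n) ∈ I' := by
    have h1 : star γ * γ ∈ I' := Ideal.mul_mem_mul (Ideal.mem_span_singleton_self _) hγI
    have h2 : star γ * γ = (⟨QuadraticAlgebra.norm γ, 0⟩ : QS n) := by
      apply QuadraticAlgebra.ext
      · simp [QuadraticAlgebra.norm_def]; ring
      · simp; ring
    rw [h2] at h1
    rcases Int.natAbs_eq (QuadraticAlgebra.norm γ) with h | h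
    · rwa [h, hγM] at h1
    · rw [h, hγM] at h1
      have := I'.neg_mem h1
      convert this using 1
      apply QuadraticAlgebra.ext <;> simp
  have hω : ∀ x y : ℤ, (⟨x, y⟩ : QS n) ∈ I' → (⟨y, x + n*y⟩ : QS n) ∈ I' := by
    intro x y h
    have := I'.mul_mem_left (⟨0, 1⟩ : QS n) h
    convert this using 1
    apply QuadraticAlgebra.ext <;> simp
  have hadd : ∀ x y x' y' t : ℤ, (⟨x, y⟩ : QS n) ∈ I' → (⟨x', y'⟩ : QS n) ∈ I' →
      (⟨x + t * x', y + t * y'⟩ : QS n) ∈ I' := by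
    intro x y x' y' t h1 h2
    have := I'.add_mem h1 (I'.mul_mem_left (⟨t, 0⟩ : QS n) h2)
    convert this using 1
    apply QuadraticAlgebra.ext <;> simp
  have hz0 : (⟨0, 0⟩ : QS n) ∈ I' := I'.zero_mem
  let Q : Ideal ℤ :=
    { carrier := {y | ∃ x, (⟨x, y⟩ : QS n) ∈ I'}
      add_mem' := by
        rintro a b ⟨x, hx⟩ ⟨y, hy⟩
        exact ⟨x + 1 * y, by simpa using hadd _ _ _ _ 1 hx hy⟩
      zero_mem' := ⟨0, hz0⟩
      smul_mem' := by
        rintro c y ⟨x, hx⟩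
        exact ⟨0 + c * x, by simpa using hadd _ _ _ _ c hz0 hx⟩ }
  obtain ⟨q, hQ⟩ := (IsPrincipalIdealRing.principal Q).principal
  have hQ' : ∀ y, y ∈ Q ↔ q ∣ y := by
    intro y; rw [hQ]; exact Ideal.mem_span_singleton
  obtain ⟨p, hp⟩ : q ∈ Q := (hQ' q).mpr dvd_rfl
  obtain ⟨a₀, ha₀⟩ : q ∣ M := (hQ' _).mp ⟨0, by simpa using hω _ _ hMI⟩
  obtain ⟨k₀, hk₀⟩ : q ∣ p := by
    have : q ∣ p + n * q := (hQ' _).mp ⟨q, hω _ _ hp⟩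
    exact (dvd_add_left (Dvd.intro_left _ rfl)).mp this
  subst hk₀
  have hMpos' : (0:ℤ) < M := by exact_mod_cast hMpos
  have hq0 : q ≠ 0 := by rintro rfl; simp at ha₀; omega
  have ha0 : a₀ ≠ 0 := by rintro rfl; simp at ha₀; omega
  have hinter : ∀ x : ℤ, (⟨x, 0⟩ : QS n) ∈ I' → (M:ℤ) ∣ x := by
    intro x hx
    by_contra hnd
    have h1 := hadd _ _ _ _ (-(x / M)) hx hMI
    have h2 : x + -(x / M) * M = x % M := by
      have := Int.emod_add_mul_ediv x M; linarith
    rw [h2] at h1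
    simp only [mul_zero, add_zero] at h1
    have h3 : x % M ≠ 0 := fun h => hnd (Int.dvd_of_emod_eq_zero h)
    have h4 := hbig _ h1 (fun h => h3 (congrArg QuadraticAlgebra.re h))
    rw [QuadraticAlgebra.norm_def] at h4
    simp only [mul_zero, add_zero, sub_zero] at h4
    have h5 := Int.emod_lt_of_pos x hMpos'
    have h6 := Int.emod_nonneg x hMpos'.ne'
    rw [abs_of_nonneg (by positivity)] at h4
    nlinarith
  have hmem : ∀ x y : ℤ, (⟨x, y⟩ : QS n) ∈ I' ↔ q ∣ y ∧ (M:ℤ) ∣ x - k₀ * y := by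
    intro x y
    constructor
    · intro h
      obtain ⟨y', rfl⟩ : q ∣ y := (hQ' _).mp ⟨x, h⟩
      refine ⟨dvd_mul_right _ _, ?_⟩
      apply hinter
      have := hadd _ _ _ _ (-y') h hp
      convert this using 2 <;> ring
    · rintro ⟨⟨y', rfl⟩, ⟨t, ht⟩⟩
      have h1 := hadd _ _ _ _ t (hadd _ _ _ _ y' hz0 hp) hMI
      convert h1 using 2
      · linear_combination ht
      · ring
  have hdvd : a₀ ∣ k₀^2 + n * k₀ - 1 := by
    have h1 := I'.mul_mem_left (⟨k₀ + n, -1⟩ : QS n) hp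
    have h2 : (⟨k₀ + n, -1⟩ : QS n) * ⟨q * k₀, q⟩ = ⟨q * (k₀^2+n*k₀-1), 0⟩ := by
      apply QuadraticAlgebra.ext <;> simp <;> ring
    rw [h2] at h1
    have h3 := hinter _ h1
    rw [ha₀] at h3
    exact Int.dvd_of_mul_dvd_mul_left hq0 h3
  set a : ℕ := a₀.natAbs with ha
  have hapos : 0 < a := Int.natAbs_pos.mpr ha0
  have hda : ∀ x : ℤ, (a:ℤ) ∣ x ↔ a₀ ∣ x := fun x => Int.natAbs_dvd
  obtain ⟨k, j, hkj, hk1, hk2⟩ : ∃ k j : ℤ, k = k₀ + j * a ∧ -(a:ℤ) ≤ 2*k+n ∧ 2*k+n ≤ a := by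
    have hpos : (0:ℤ) < 2 * a := by omega
    refine ⟨k₀ + (-((2*k₀+n+a) / (2*a))) * a, _, rfl, ?_, ?_⟩
    · have := Int.emod_nonneg (2*k₀+n+a) hpos.ne'
      have h2 := Int.emod_add_mul_ediv (2*k₀+n+a) (2*a)
      linarith
    · have := Int.emod_lt_of_pos (2*k₀+n+a) hpos
      have h2 := Int.emod_add_mul_ediv (2*k₀+n+a) (2*a)
      linarith
  have hk : (a:ℤ) ∣ k^2+n*k-1 := by
    rw [hkj, show (k₀ + j * (a:ℤ))^2 + n * (k₀ + j * a) - 1 = (k₀^2+n*k₀-1) + a * (2*k₀*j + j^2*a + n*j) by ring]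
    exact dvd_add ((hda _).mpr hdvd) (dvd_mul_right _ _)
  refine ⟨k, a, hapos, ?_, hk, star γ, ⟨q, 0⟩, hsγ0, fun h => hq0 (congrArg QuadraticAlgebra.re h), ?_⟩
  · have h1 : (⟨q * k, q⟩ : QS n) ∈ I' := by
      rw [hmem]
      refine ⟨dvd_rfl, ?_⟩
      rw [hkj, show q * (k₀ + j * (a:ℤ)) - k₀ * q = q * (a * j) by ring, ha₀]
      exact mul_dvd_mul_left _ (((hda _).mp dvd_rfl).mul_right _)
    have h2 := hbig _ h1 (fun h => hq0 (congrArg QuadraticAlgebra.im h))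
    rw [QuadraticAlgebra.norm_def] at h2
    simp only at h2
    rw [show q * k * (q * k) + n * (q * k) * q - 1 * q * q = q^2 * (k^2+n*k-1) by ring, abs_mul,
      abs_of_nonneg (sq_nonneg q), ha₀, mul_pow] at h2
    have h3 : a₀^2 ≤ |k^2+n*k-1| := le_of_mul_le_mul_left h2 (by positivity)
    have h4 : a₀^2 = (a:ℤ)^2 := by rw [ha, Int.natAbs_sq]
    rw [h4] at h3
    have h5 : (2*k+n)^2 ≤ (a:ℤ)^2 := sq_le_sq' hk1 hk2
    by_contra h6
    push Not at h6
    have h7 : 0 ≤ k^2+n*k-1 := by nlinarith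
    rw [abs_of_nonneg h7] at h3
    have : (0:ℤ) < a := by exact_mod_cast hapos
    nlinarith
  · apply le_antisymm
    · intro z hz
      have hz' : (⟨z.re, z.im⟩ : QS n) ∈ I' := hz
      rw [hmem] at hz'
      obtain ⟨⟨y', hy'⟩, ⟨t, ht⟩⟩ := hz'
      rw [Ideal.mem_span_singleton_mul]
      refine ⟨⟨a₀ * t + k₀ * y', y'⟩, ?_, ?_⟩
      · rw [mem_latI]
        simp only
        rw [hkj, show a₀ * t + k₀ * y' - (k₀ + j * (a:ℤ)) * y' = a₀ * t - a * (j * y') by ring]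
        exact dvd_sub (((hda _).mpr dvd_rfl).mul_right _) (dvd_mul_right _ _)
      · apply QuadraticAlgebra.ext
        · simp only [QuadraticAlgebra.re_mul]
          rw [hy', ha₀] at ht
          linear_combination -ht
        · simp only [QuadraticAlgebra.im_mul]
          rw [hy']; ring
    · intro z hz
      obtain ⟨w, hw, rfl⟩ := Ideal.mem_span_singleton_mul.mp hz
      rw [mem_latI] at hw
      have : (⟨q, 0⟩ : QS n) * w = ⟨q * w.re, q * w.im⟩ := by
        apply QuadraticAlgebra.ext <;> simp
      rw [this]
      show _ ∈ I'
      rw [hmem]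
      refine ⟨dvd_mul_right _ _, ?_⟩
      rw [show q * w.re - k₀ * (q * w.im) = q * (w.re - k * w.im + a * (j * w.im)) by rw [hkj]; ring, ha₀]
      refine mul_dvd_mul_left _ ?_
      rw [← hda]
      exact dvd_add hw (dvd_mul_right _ _)
end QS

end

section

lemma ClassGroup.exists_integral_rep {R : Type*} [CommRing R] [IsDomain R] (c : ClassGroup R) :
    ∃ (J : (FractionalIdeal (nonZeroDivisors R) (FractionRing R))ˣ) (I : Ideal R),
      (J : FractionalIdeal (nonZeroDivisors R) (FractionRing R)) = I ∧ I ≠ ⊥ ∧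
      ClassGroup.mk (FractionRing R) J = c := by
  refine ClassGroup.induction (R := R) (FractionRing R) (P := fun c => 
    ∃ (J : (FractionalIdeal (nonZeroDivisors R) (FractionRing R))ˣ) (I : Ideal R),
      (J : FractionalIdeal (nonZeroDivisors R) (FractionRing R)) = I ∧ I ≠ ⊥ ∧
      ClassGroup.mk (FractionRing R) J = c) (fun K => ?_) c
  obtain ⟨J, hJ⟩ := FractionalIdeal.isUnit_num.mpr K.isUnit
  refine ⟨J, _, hJ, ?_, ?_⟩
  · rw [← FractionalIdeal.coeIdeal_ne_zero (K := FractionRing R), ← hJ]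
    exact J.ne_zero
  · symm
    rw [ClassGroup.mk_eq_mk]
    have hd : (algebraMap R (FractionRing R)) ((K : FractionalIdeal (nonZeroDivisors R) (FractionRing R)).den : R) ≠ 0 := by
      have := nonZeroDivisors.ne_zero (K : FractionalIdeal (nonZeroDivisors R) (FractionRing R)).den.2
      simpa using this
    refine ⟨Units.mk0 _ hd, ?_⟩
    ext1
    rw [hJ, Units.val_mul, coe_toPrincipalIdeal, Units.val_mk0, mul_comm]
    exact FractionalIdeal.den_mul_self_eq_num' _ _ _

namespace QS
variable {n : ℕ}

/-- the finite set of reduced data -/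
def redSet (n : ℕ) : Finset (Σ _ : ℤ, ℕ) :=
  (Finset.Icc (-(n:ℤ) - 1) 1).sigma fun k => (k^2+n*k-1).natAbs.divisors

lemma class_data (hn : 1 ≤ n) [IsDomain (QS n)] (c : ClassGroup (QS n)) :
    ∃ x ∈ redSet n, ∃ (h : (x.2:ℤ) ∣ x.1^2+n*x.1-1)
      (J : (FractionalIdeal (nonZeroDivisors (QS n)) (FractionRing (QS n)))ˣ) (I : Ideal (QS n)),
      (J : FractionalIdeal (nonZeroDivisors (QS n)) (FractionRing (QS n))) = I ∧
      ClassGroup.mk (FractionRing (QS n)) J = c ∧ ∃ α β : QS n, α ≠ 0 ∧ β ≠ 0 ∧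
    Ideal.span {α} * I = Ideal.span {β} * latI (x.2:ℤ) x.1 h := by
  obtain ⟨J, I, hJ, hI, hc⟩ := ClassGroup.exists_integral_rep c
  obtain ⟨k, a, ha, hk, h, hαβ⟩ := exists_latI hn I hI
  refine ⟨⟨k, a⟩, ?_, h, J, I, hJ, hc, hαβ⟩
  rw [redSet, Finset.mem_sigma, Finset.mem_Icc, Nat.mem_divisors]
  refine ⟨⟨?_, ?_⟩, ?_, ?_⟩
  · show -(n:ℤ) - 1 ≤ k
    nlinarith
  · show k ≤ 1
    nlinarith
  · exact Int.natCast_dvd.mp h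
  · rw [Int.natAbs_ne_zero]
    show k^2+n*k-1 ≠ 0
    intro h0
    nlinarith

lemma finite_and_card (hn : 1 ≤ n) [IsDomain (QS n)] : Finite (ClassGroup (QS n)) ∧
    Nat.card (ClassGroup (QS n)) ≤ (redSet n).card := by
  choose f hf h J I hJ hc α β hα hβ hab using class_data (n := n) hn
  have hinj : Function.Injective (fun c => (⟨f c, hf c⟩ : redSet n)) := by
    intro c c' hcc
    have e : f c = f c' := congrArg Subtype.val hcc
    rw [← hc c, ← hc c', ClassGroup.mk_eq_mk_of_coe_ideal (hJ c) (hJ c')]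
    refine ⟨β c' * α c, β c * α c', mul_ne_zero (hβ _) (hα _), mul_ne_zero (hβ _) (hα _), ?_⟩
    rw [← Ideal.span_singleton_mul_span_singleton, mul_assoc, hab,
      ← Ideal.span_singleton_mul_span_singleton, mul_assoc, hab]
    have e2 : latI (n := n) ((f c).2:ℤ) (f c).1 (h c) = latI ((f c').2:ℤ) (f c').1 (h c') := by
      ext z; rw [mem_latI, mem_latI, e]
    rw [e2, ← mul_assoc, ← mul_assoc, mul_comm (Ideal.span {β c'})]
  refine ⟨Finite.of_injective _ hinj, ?_⟩
  have := Nat.card_le_card_of_injective _ hinj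
  simpa using this

end QS

theorem classNumber_upper (ε : ℝ) (hε : 0 < ε) : ∃ C : ℝ, 1 ≤ C ∧ ∀ n : ℕ, 1 ≤ n →
    (classNumber ((n:ℤ)^2+4) : ℝ) ≤ C * (n:ℝ)^(1+ε) := by
  obtain ⟨C, hC1, hC⟩ := divisor_bound (ε/2) (by positivity)
  refine ⟨4 * (C * (4:ℝ)^(ε/2)), ?_, fun n hn => ?_⟩
  · have : (1:ℝ) ≤ (4:ℝ)^(ε/2) := Real.one_le_rpow (by norm_num) (by positivity)
    nlinarith
  have := QS.isDomain hn
  rw [QS.classNumber_eq hn]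
  have h1 : (1:ℝ) ≤ n := by exact_mod_cast hn
  calc ((Nat.card (ClassGroup (QS n)) : ℕ) : ℝ) ≤ ((QS.redSet n).card : ℕ) := by
        exact_mod_cast (QS.finite_and_card hn).2
    _ = ∑ k ∈ Finset.Icc (-(n:ℤ) - 1) 1, (((k^2+n*k-1).natAbs.divisors.card : ℕ) : ℝ) := by
        rw [QS.redSet, Finset.card_sigma]; push_cast; rfl
    _ ≤ ∑ k ∈ Finset.Icc (-(n:ℤ) - 1) 1, C * (4:ℝ)^(ε/2) * (n:ℝ)^ε := by
        refine Finset.sum_le_sum fun k hk => (hC _).trans ?_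
        rw [Finset.mem_Icc] at hk
        have h2 : |k^2+n*k-1| ≤ 4 * (n:ℤ)^2 := by
          have : (1:ℤ) ≤ n := by exact_mod_cast hn
          rw [abs_le]; constructor <;> nlinarith
        have h3 : (((k^2+n*k-1).natAbs : ℕ) : ℝ) ≤ 4 * (n:ℝ)^2 := by
          have : (((k^2+n*k-1).natAbs : ℕ) : ℤ) ≤ 4 * (n:ℤ)^2 := by rwa [← Int.abs_eq_natAbs]
          exact_mod_cast this
        calc C * (((k^2+n*k-1).natAbs : ℕ) : ℝ)^(ε/2) ≤ C * (4 * (n:ℝ)^2)^(ε/2) := by gcongr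
          _ = C * (4:ℝ)^(ε/2) * (n:ℝ)^ε := by
            rw [Real.mul_rpow (by norm_num) (by positivity), ← Real.rpow_natCast (n:ℝ) 2,
              ← Real.rpow_mul (by positivity), mul_assoc]
            congr 3; push_cast; ring
    _ = ((n:ℝ) + 3) * (C * (4:ℝ)^(ε/2) * (n:ℝ)^ε) := by
        rw [Finset.sum_const, Int.card_Icc, nsmul_eq_mul]
        congr 1
        have : (1 + 1 - (-(n:ℤ) - 1)).toNat = n + 3 := by omega
        rw [this]; push_cast; ring
    _ ≤ (4 * n) * (C * (4:ℝ)^(ε/2) * (n:ℝ)^ε) := by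
        gcongr; linarith
    _ = _ := by
        rw [Real.rpow_add (by linarith), Real.rpow_one]; ring

end

section

namespace QS
variable {n : ℕ}

/-- good pairs: primitive ideals prime to the discriminant -/
def good (n : ℕ) (p : ℕ × ℕ) : Prop :=
  1 ≤ p.1 ∧ p.1.Coprime (n^2+4) ∧ p.2 < p.1 ∧ (p.1:ℤ) ∣ (p.2:ℤ)^2 + n * p.2 - 1

lemma dvd_conj {a k : ℤ} (h : a ∣ k^2 + n*k - 1) : a ∣ (-k-n)^2 + n*(-k-n) - 1 := by
  rwa [show (-k-n)^2 + n*(-k-n) - 1 = k^2 + n*k - 1 by ring]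

/-- ideal of good pair -/
def gI {p : ℕ × ℕ} (hp : good n p) : Ideal (QS n) := latI (p.1:ℤ) p.2 hp.2.2.2
/-- conjugate ideal -/
def gI' {p : ℕ × ℕ} (hp : good n p) : Ideal (QS n) := latI (p.1:ℤ) (-(p.2:ℤ)-n) (dvd_conj hp.2.2.2)

/-- integer in QS -/
def zc (a : ℤ) : QS n := ⟨a, 0⟩

lemma zc_mul (a : ℤ) (z : QS n) : zc a * z = ⟨a * z.re, a * z.im⟩ := by
  apply QuadraticAlgebra.ext <;> simp [zc]

lemma zc_ne {a : ℤ} (h : a ≠ 0) : (zc a : QS n) ≠ 0 := fun h' => h (congrArg QuadraticAlgebra.re h')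

lemma zc_zc (a b : ℤ) : (zc a : QS n) * zc b = zc (a * b) := by
  rw [zc_mul]; apply QuadraticAlgebra.ext <;> simp [zc]

lemma zc_dvd {a : ℤ} {z : QS n} : zc a ∣ z ↔ a ∣ z.re ∧ a ∣ z.im := by
  constructor
  · rintro ⟨w, rfl⟩
    rw [zc_mul]; exact ⟨dvd_mul_right _ _, dvd_mul_right _ _⟩
  · rintro ⟨⟨x, hx⟩, ⟨y, hy⟩⟩
    refine ⟨⟨x, y⟩, ?_⟩
    rw [zc_mul]
    exact QuadraticAlgebra.ext hx hy

lemma gI_mul {p : ℕ × ℕ} (hp : good n p) : gI hp * gI' hp = Ideal.span {zc (p.1:ℤ)} := by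
  obtain ⟨h1, h2, h3, h4⟩ := id hp
  apply le_antisymm
  · rw [Ideal.mul_le]
    intro z hz w hw
    rw [gI, mem_latI] at hz
    rw [gI', mem_latI] at hw
    rw [Ideal.mem_span_singleton, zc_dvd]
    obtain ⟨a, ha⟩ := hz
    obtain ⟨b, hb⟩ := hw
    obtain ⟨c, hc⟩ := h4
    have ez : z.re = p.2 * z.im + p.1 * a := by linarith
    have ew : w.re = (-p.2-n) * w.im + p.1 * b := by linarith
    constructor
    · rw [QuadraticAlgebra.re_mul, ez, ew]
      refine ⟨-c * z.im * w.im + a * ((-p.2-n) * w.im + p.1 * b) + p.2 * z.im * b, ?_⟩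
      linear_combination -z.im * w.im * hc
    · rw [QuadraticAlgebra.im_mul, ez, ew]
      refine ⟨a * w.im + z.im * b, ?_⟩
      ring
  · rw [Ideal.span_singleton_le_iff_mem]
    have hcop : IsCoprime (p.1:ℤ) (2*p.2+n) := by
      have : IsCoprime (p.1:ℤ) ((2*p.2+n)^2) := by
        obtain ⟨c, hc⟩ := h4
        rw [show (2*(p.2:ℤ)+n)^2 = ((n^2+4 : ℕ):ℤ) + p.1 * (4 * c) by push_cast; linear_combination 4 * hc]
        exact IsCoprime.add_mul_left_right (Nat.isCoprime_iff_coprime.mpr h2) _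
      exact (IsCoprime.pow_right_iff (by norm_num)).mp this
    obtain ⟨u, v, huv⟩ := hcop
    have m1 : (zc (p.1:ℤ) : QS n) ∈ gI hp := by rw [gI, mem_latI]; simp [zc]
    have m2 : (zc (p.1:ℤ) : QS n) ∈ gI' hp := by rw [gI', mem_latI]; simp [zc]
    have m3 : (⟨p.2, 1⟩ : QS n) ∈ gI hp := by rw [gI, mem_latI]; simp
    have m4 : (⟨-p.2-n, 1⟩ : QS n) ∈ gI' hp := by rw [gI', mem_latI]; simp
    have e : (zc (p.1:ℤ) : QS n) = zc u * (zc (p.1:ℤ) * zc (p.1:ℤ)) +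
        zc v * (⟨p.2, 1⟩ * zc (p.1:ℤ) - zc (p.1:ℤ) * ⟨-p.2-n, 1⟩) := by
      apply QuadraticAlgebra.ext
      · simp [zc]; linear_combination (-(p.1:ℤ)) * huv
      · simp [zc]
    rw [e]
    exact Ideal.add_mem _ (Ideal.mul_mem_left _ _ (Ideal.mul_mem_mul m1 m2))
      (Ideal.mul_mem_left _ _ (Ideal.sub_mem _ (Ideal.mul_mem_mul m3 m2) (Ideal.mul_mem_mul m1 m4)))

lemma gI_inj {p q : ℕ × ℕ} (hp : good n p) (hq : good n q) (h : gI hp = gI hq) : p = q := by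
  have m1 : (zc (p.1:ℤ) : QS n) ∈ gI hq := by rw [← h, gI, mem_latI]; simp [zc]
  have m2 : (zc (q.1:ℤ) : QS n) ∈ gI hp := by rw [h, gI, mem_latI]; simp [zc]
  have m3 : (⟨p.2, 1⟩ : QS n) ∈ gI hq := by rw [← h, gI, mem_latI]; simp
  rw [gI, mem_latI] at m1 m2 m3
  simp only [zc, mul_zero, sub_zero, mul_one] at m1 m2 m3
  have e1 : p.1 = q.1 := Nat.dvd_antisymm (Int.natCast_dvd_natCast.mp m2) (Int.natCast_dvd_natCast.mp m1)
  have l1 := hp.2.2.1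
  have l2 := hq.2.2.1
  have e2 : p.2 = q.2 := by
    have := Int.eq_zero_of_abs_lt_dvd m3 (by rw [abs_lt]; constructor <;> omega)
    omega
  exact Prod.ext e1 e2

lemma star_mem {p q : ℕ × ℕ} (hp : good n p) (hq : good n q) {z : QS n} (hz : z ∈ gI hp * gI' hq) :
    star z ∈ gI' hp * gI hq := by
  induction hz using Submodule.mul_induction_on' with
  | mem_mul_mem x hx y hy =>
    rw [star_mul']
    apply Ideal.mul_mem_mul
    · rw [gI, mem_latI] at hx
      rw [gI', mem_latI]
      simp only [QuadraticAlgebra.re_star, QuadraticAlgebra.im_star]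
      convert hx using 1; ring
    · rw [gI', mem_latI] at hy
      rw [gI, mem_latI]
      simp only [QuadraticAlgebra.re_star, QuadraticAlgebra.im_star]
      convert hy using 1; ring
  | add x hx y hy h1 h2 => rw [star_add]; exact Ideal.add_mem _ h1 h2

lemma dvd_norm {p q : ℕ × ℕ} (hp : good n p) (hq : good n q) {z : QS n} (hz : z ∈ gI hp * gI' hq) :
    (p.1 * q.1 : ℤ) ∣ QuadraticAlgebra.norm z := by
  have h1 : z * star z ∈ (gI hp * gI' hq) * (gI' hp * gI hq) := Ideal.mul_mem_mul hz (star_mem hp hq hz)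
  rw [show (gI hp * gI' hq) * (gI' hp * gI hq) = (gI hp * gI' hp) * (gI hq * gI' hq) by
    ac_rfl, gI_mul, gI_mul, Ideal.span_singleton_mul_span_singleton, zc_zc,
    Ideal.mem_span_singleton, zc_dvd] at h1
  convert h1.1 using 1
  simp [QuadraticAlgebra.norm_def]; ring

lemma gamma_aux [IsDomain (QS n)] {p q : ℕ × ℕ} (hp : good n p) (hq : good n q) {α β : QS n} (hα : α ≠ 0)
    (hab : Ideal.span {α} * gI hp = Ideal.span {β} * gI hq) : ∃ γ, α * γ = β * zc (q.1:ℤ) ∧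
      γ ∈ gI hp * gI' hq ∧ gI hp * gI' hq = Ideal.span {γ} := by
  have e : Ideal.span {α} * (gI hp * gI' hq) = Ideal.span {β * zc (q.1:ℤ)} := by
    rw [← mul_assoc, hab, mul_assoc, gI_mul, Ideal.span_singleton_mul_span_singleton]
  have : β * zc (q.1:ℤ) ∈ Ideal.span {α} * (gI hp * gI' hq) := by
    rw [e]; exact Ideal.mem_span_singleton_self _
  obtain ⟨γ, hγ, hγ2⟩ := Ideal.mem_span_singleton_mul.mp this
  refine ⟨γ, hγ2, hγ, ?_⟩
  rw [← hγ2, ← Ideal.span_singleton_mul_span_singleton] at e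
  exact (Ideal.span_singleton_mul_right_inj hα).mp e

lemma gg_aux {R : Type*} [CommRing R] [IsDomain R] {α β γ γ' a b : R} (hα : α ≠ 0) (hβ : β ≠ 0)
    (h1 : α * γ = β * b) (h2 : β * γ' = α * a) : γ * γ' = a * b := by
  apply mul_left_cancel₀ (mul_ne_zero hα hβ)
  linear_combination β * γ' * h1 + β * b * h2

lemma norm_aux {x y m : ℤ} (hm : 0 < m) (hx : m ∣ x) (hy : m ∣ y) (h : x * y = m^2) : |x| = m := by
  obtain ⟨a, rfl⟩ := hx
  obtain ⟨b, rfl⟩ := hy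
  have hab1 : a * b = 1 := by
    have h0 : m^2 ≠ 0 := by positivity
    apply mul_left_cancel₀ h0
    linear_combination h
  rw [abs_mul, Int.isUnit_iff_abs_eq.mp (IsUnit.of_mul_eq_one _ hab1), mul_one, abs_of_pos hm]

lemma norm_zc (a : ℤ) : QuadraticAlgebra.norm (zc a : QS n) = a^2 := by
  simp [QuadraticAlgebra.norm_def, zc]; ring

lemma exists_gamma [IsDomain (QS n)] {p q : ℕ × ℕ} (hp : good n p) (hq : good n q)
    (h : ∃ α β : QS n, α ≠ 0 ∧ β ≠ 0 ∧ Ideal.span {α} * gI hp = Ideal.span {β} * gI hq) :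
    ∃ γ : QS n, |QuadraticAlgebra.norm γ| = p.1 * q.1 ∧ γ ∈ gI' hq ∧ γ ≠ 0 ∧
      Ideal.span {γ} * gI hq = Ideal.span {zc (q.1:ℤ)} * gI hp := by
  obtain ⟨α, β, hα, hβ, hab⟩ := h
  obtain ⟨γ, h1, h2, h3⟩ := gamma_aux hp hq hα hab
  obtain ⟨γ', h1', h2', h3'⟩ := gamma_aux hq hp hβ hab.symm
  have hp0 : (0:ℤ) < p.1 := by exact_mod_cast hp.1
  have hq0 : (0:ℤ) < q.1 := by exact_mod_cast hq.1
  have hpq : (0:ℤ) < p.1 * q.1 := mul_pos hp0 hq0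
  have hgg : γ * γ' = zc (p.1 * q.1 : ℤ) := by
    rw [← zc_zc]; exact gg_aux hα hβ h1 h1'
  refine ⟨γ, ?_, Ideal.mul_le_right h2, ?_, ?_⟩
  · refine norm_aux hpq (dvd_norm hp hq h2) (mul_comm (q.1:ℤ) p.1 ▸ dvd_norm hq hp h2') ?_
    rw [← map_mul, hgg, norm_zc]
  · intro h0
    rw [h0, zero_mul] at hgg
    exact zc_ne (n := n) hpq.ne' hgg.symm
  · rw [← h3, mul_assoc, mul_comm (gI' hq), gI_mul, mul_comm]

lemma exists_cls (n : ℕ) [IsDomain (QS n)] : ∃ cls : ℕ × ℕ → ClassGroup (QS n), ∀ p q (hp : good n p) (hq : good n q),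
    cls p = cls q → ∃ α β : QS n, α ≠ 0 ∧ β ≠ 0 ∧ Ideal.span {α} * gI hp = Ideal.span {β} * gI hq := by
  have key : ∀ p : ℕ × ℕ, ∃ c : ClassGroup (QS n), ∀ hp : good n p, 
     ∃ J : (FractionalIdeal (nonZeroDivisors (QS n)) (FractionRing (QS n)))ˣ,
      (J : FractionalIdeal (nonZeroDivisors (QS n)) (FractionRing (QS n))) = gI hp ∧ 
      ClassGroup.mk (FractionRing (QS n)) J = c := by
    intro p
    by_cases hp : good n p
    · have : IsUnit ((gI hp : Ideal (QS n)) : FractionalIdeal (nonZeroDivisors (QS n)) (FractionRing (QS n))) := by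
        have hu : IsUnit (((gI hp * gI' hp : Ideal (QS n))) : FractionalIdeal (nonZeroDivisors (QS n)) (FractionRing (QS n))) := by
          rw [gI_mul, FractionalIdeal.coeIdeal_span_singleton]
          have h0 : algebraMap (QS n) (FractionRing (QS n)) (zc (p.1:ℤ)) ≠ 0 := by
            have : (zc (p.1:ℤ) : QS n) ≠ 0 := zc_ne (by have := hp.1; positivity)
            simpa using this
          refine IsUnit.of_mul_eq_one (FractionalIdeal.spanSingleton _ (algebraMap (QS n) (FractionRing (QS n)) (zc (p.1:ℤ)))⁻¹) ?_
          rw [FractionalIdeal.spanSingleton_mul_spanSingleton, mul_inv_cancel₀ h0, FractionalIdeal.spanSingleton_one]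
        rw [FractionalIdeal.coeIdeal_mul] at hu
        exact isUnit_of_mul_isUnit_left hu
      obtain ⟨J, hJ⟩ := this
      exact ⟨_, fun _ => ⟨J, hJ, rfl⟩⟩
    · exact ⟨1, fun h => absurd h hp⟩
  choose cls hcls using key
  refine ⟨cls, fun p q hp hq h => ?_⟩
  obtain ⟨J, h1, h2⟩ := hcls p hp
  obtain ⟨J', h1', h2'⟩ := hcls q hq
  rw [← h2, ← h2', ClassGroup.mk_eq_mk_of_coe_ideal h1 h1'] at h
  exact h
end QS

end

section

namespace QS
variable {n : ℕ}

/-- first embedding as monoid hom -/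
def S1 (n : ℕ) : QS n →* ℝ where
  toFun := s1
  map_one' := by simp [s1, re_one', im_one']
  map_mul' := s1_mul
/-- second embedding as monoid hom -/
def S2 (n : ℕ) : QS n →* ℝ where
  toFun := s2
  map_one' := by simp [s2, re_one', im_one']
  map_mul' := s2_mul

/-- the fundamental unit -/
def un (n : ℕ) : (QS n)ˣ where
  val := ⟨0, 1⟩
  inv := ⟨-n, 1⟩
  val_inv := by
    apply QuadraticAlgebra.ext
    · simp [re_one']
    · simp [im_one']
  inv_val := by
    apply QuadraticAlgebra.ext
    · simp [re_one']
    · simp [im_one']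

lemma s1_un (j : ℤ) : s1 ((un n ^ j : (QS n)ˣ) : QS n) = ep n ^ j := by
  have h := map_zpow (Units.map (S1 n)) (un n) j
  have h2 := congrArg (Units.val) h
  rw [Units.val_zpow_eq_zpow_val] at h2
  have h3 : ((Units.map (S1 n) (un n) : ℝˣ) : ℝ) = ep n := by
    show s1 (⟨0,1⟩ : QS n) = _
    simp [s1]
  rw [h3] at h2
  exact h2

lemma s2_un (j : ℤ) : s2 ((un n ^ j : (QS n)ˣ) : QS n) = ep' n ^ j := by
  have h := map_zpow (Units.map (S2 n)) (un n) j
  have h2 := congrArg (Units.val) h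
  rw [Units.val_zpow_eq_zpow_val] at h2
  have h3 : ((Units.map (S2 n) (un n) : ℝˣ) : ℝ) = ep' n := by
    show s2 (⟨0,1⟩ : QS n) = _
    simp [s2]
  rw [h3] at h2
  exact h2

lemma abs_ep' (n : ℕ) : |ep' n| = (ep n)⁻¹ := by
  have h := congrArg abs (ep_mul n)
  rw [abs_mul, abs_of_pos (ep_pos n), abs_neg, abs_one] at h
  exact eq_inv_of_mul_eq_one_right h

lemma exists_normalized (hn : 1 ≤ n) {γ : QS n} (h0 : γ ≠ 0) : ∃ γ' : QS n,
    Ideal.span {γ'} = Ideal.span {γ} ∧ |s1 γ' * s2 γ'| = |s1 γ * s2 γ| ∧ |s2 γ'| ≤ |s1 γ'| ∧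
    |s1 γ'| < ep n ^ 2 * |s2 γ'| ∧ 0 < |s2 γ'| := by
  have a1 : 0 < |s1 γ| := abs_pos.mpr fun h => h0 (s1_eq_zero hn h)
  have a2 : 0 < |s2 γ| := abs_pos.mpr fun h => h0 (s2_eq_zero hn h)
  have he := one_lt_ep hn
  have he0 := ep_pos n
  obtain ⟨j, hj1, hj2⟩ := exists_mem_Ico_zpow (div_pos a1 a2) (one_lt_pow₀ he two_ne_zero)
  have e0 : 0 < ep n ^ j := zpow_pos he0 j
  have e2 : (ep n ^ 2)^j = ep n ^ j * ep n ^ j := by rw [pow_two, mul_zpow]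
  rw [zpow_add_one₀ (by positivity), e2] at hj2
  rw [e2, le_div_iff₀ a2] at hj1
  rw [div_lt_iff₀ a2] at hj2
  refine ⟨((un n ^ (-j) : (QS n)ˣ) : QS n) * γ, ?_, ?_, ?_, ?_, ?_⟩
  · exact Ideal.span_singleton_mul_left_unit (Units.isUnit _) _
  all_goals
    simp only [s1_mul, s2_mul, s1_un, s2_un, abs_mul, abs_zpow, abs_ep', abs_of_pos he0]
    simp only [zpow_neg, inv_zpow, inv_inv]
  · field_simp
  · rw [inv_mul_eq_div, le_div_iff₀ e0]; linarith
  · rw [inv_mul_eq_div, div_lt_iff₀ e0]; linarith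
  · positivity

/-- lattice points in a box -/
lemma box_count (q : ℕ) (hq : 1 ≤ q) (l : ℤ) (U V : ℝ) (hV : 0 ≤ V) (hVU : V ≤ U) :
    ∃ S : Finset (QS n), (∀ z : QS n, (q:ℤ) ∣ z.re - l * z.im → |s1 z| ≤ U → |s2 z| ≤ V → z ∈ S) ∧
      (S.card : ℝ) ≤ (4 * U / rD n + 1) * (2 * V / q + 1) := by
  classical
  have hr := rD_pos n
  have hq0 : (0:ℝ) < q := by exact_mod_cast hq
  set A : ℤ := ⌊2 * U / rD n⌋ with hA
  have hA0 : 0 ≤ A := Int.floor_nonneg.mpr (by have : 0 ≤ U := hV.trans hVU; positivity)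
  let lo : ℤ → ℝ := fun y => (-V - y * (l + ep' n)) / q
  let T : Finset (Σ _ : ℤ, ℤ) := (Finset.Icc (-A) A).sigma fun y => Finset.Icc ⌈lo y⌉ ⌊lo y + 2 * V / q⌋
  refine ⟨T.image fun t => ⟨q * t.2 + l * t.1, t.1⟩, ?_, ?_⟩
  · rintro ⟨x, y⟩ ⟨j, hj⟩ h1 h2
    simp only at hj
    rw [Finset.mem_image]
    refine ⟨⟨y, j⟩, ?_, ?_⟩
    · rw [Finset.mem_sigma, Finset.mem_Icc, Finset.mem_Icc]
      have hy : |(y:ℝ)| ≤ 2 * U / rD n := by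
        rw [le_div_iff₀ hr]
        have e : (y:ℝ) * rD n = s1 (⟨x, y⟩ : QS n) - s2 (⟨x, y⟩ : QS n) := by
          simp only [s1, s2, ← ep_sub]; ring
        calc |(y:ℝ)| * rD n = |(y:ℝ) * rD n| := by rw [abs_mul, abs_of_pos hr]
          _ ≤ |s1 (⟨x, y⟩ : QS n)| + |s2 (⟨x, y⟩ : QS n)| := by rw [e]; exact abs_sub _ _
          _ ≤ 2 * U := by linarith
      rw [abs_le] at hy
      have hx : (x:ℝ) = q * j + l * y := by
        have : x = q * j + l * y := by linarith
        exact_mod_cast this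
      rw [abs_le] at h2
      simp only [s2] at h2
      refine ⟨⟨?_, Int.le_floor.mpr hy.2⟩, Int.ceil_le.mpr ?_, Int.le_floor.mpr ?_⟩
      · have : -y ≤ A := Int.le_floor.mpr (by push_cast; linarith)
        show -A ≤ y
        linarith
      · show (-V - y * (l + ep' n)) / q ≤ (j:ℝ)
        rw [div_le_iff₀ hq0]
        linarith
      · show (j:ℝ) ≤ (-V - y * (l + ep' n)) / q + 2 * V / q
        rw [← add_div, le_div_iff₀ hq0]
        linarith
    · apply QuadraticAlgebra.ext
      · show q * j + l * y = x
        linarith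
      · rfl
  · have hc : ∀ y, ((Finset.Icc ⌈lo y⌉ ⌊lo y + 2 * V / q⌋).card : ℝ) ≤ 2 * V / q + 1 := by
      intro y
      rw [Int.card_Icc]
      have h0 : 0 ≤ 2 * V / q + 1 := by positivity
      have h1 := Int.floor_le (lo y + 2 * V / q)
      have h2 := Int.le_ceil (lo y)
      rcases le_total (⌊lo y + 2 * V / q⌋ + 1 - ⌈lo y⌉) 0 with h | h
      · rw [Int.toNat_of_nonpos h]; simpa using h0
      · have : (((⌊lo y + 2 * V / q⌋ + 1 - ⌈lo y⌉).toNat : ℤ) : ℝ) = ⌊lo y + 2 * V / q⌋ + 1 - ⌈lo y⌉ := by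
          rw [Int.toNat_of_nonneg h]; push_cast; ring
        rw [Int.cast_natCast] at this
        rw [this]; linarith
    calc (((T.image fun t => (⟨q * t.2 + l * t.1, t.1⟩ : QS n)).card : ℕ) : ℝ) ≤ (T.card : ℝ) := by
          exact_mod_cast Finset.card_image_le
      _ = ∑ y ∈ Finset.Icc (-A) A, ((Finset.Icc ⌈lo y⌉ ⌊lo y + 2 * V / q⌋).card : ℝ) := by
          rw [Finset.card_sigma]; push_cast; rfl
      _ ≤ ∑ y ∈ Finset.Icc (-A) A, (2 * V / q + 1) := Finset.sum_le_sum fun y _ => hc y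
      _ = (2 * A + 1) * (2 * V / q + 1) := by
          rw [Finset.sum_const, Int.card_Icc, nsmul_eq_mul]
          congr 1
          have : ((A + 1 - -A).toNat : ℤ) = 2 * A + 1 := by rw [Int.toNat_of_nonneg (by omega)]; ring
          exact_mod_cast this
      _ ≤ _ := by
          have := Int.floor_le (2 * U / rD n)
          have e : 4 * U / rD n = 2 * (2 * U / rD n) := by ring
          rw [e]
          gcongr
end QS

end

section

namespace QS
variable {n : ℕ}

lemma fib_count (hn : 1 ≤ n) [IsDomain (QS n)] {q : ℕ × ℕ} (hq : good n q) :
    ∃ B : ℝ, 0 ≤ B ∧ ∀ X : ℕ, 1 ≤ X → ∀ F : Finset (ℕ × ℕ), (∀ p ∈ F, p.1 ≤ X ∧ ∃ hp : good n p,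
      ∃ α β : QS n, α ≠ 0 ∧ β ≠ 0 ∧ Ideal.span {α} * gI hp = Ideal.span {β} * gI hq) →
      (F.card : ℝ) ≤ (Nat.log 2 (n+1) + 1) * (16 / rD n) * X + B * √X := by
  classical
  have hr := rD_pos n
  have hq1 : (1:ℝ) ≤ q.1 := by exact_mod_cast hq.1
  have hq0 : (0:ℝ) < q.1 := by linarith
  set Lb := Nat.log 2 (n+1) + 1 with hLb
  refine ⟨∑ i ∈ Finset.range Lb, (4 * (2^(i+1) * √q.1) / rD n + 2 * (√q.1 / 2^i) / q.1 + 1),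
    Finset.sum_nonneg fun i _ => by positivity, ?_⟩
  intro X hX F hF
  have hX1 : (1:ℝ) ≤ X := by exact_mod_cast hX
  have hX0 : (0:ℝ) < X := by linarith
  set T : ℝ := X * q.1 with hT
  have hT0 : 0 < T := by positivity
  have hsT : 0 < √T := Real.sqrt_pos.mpr hT0
  have hTT : √T * √T = T := Real.mul_self_sqrt hT0.le
  have hbox := fun i : ℕ => box_count (n := n) q.1 hq.1 (-(q.2:ℤ)-n) (2^(i+1) * √T) (√T / 2^i)
    (by positivity) (by
      have h1 : (1:ℝ) ≤ 2^i := one_le_pow₀ (by norm_num)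
      have h2 : (1:ℝ) ≤ 2^(i+1) := one_le_pow₀ (by norm_num)
      calc √T / 2^i ≤ √T := div_le_self hsT.le h1
        _ ≤ 2^(i+1) * √T := le_mul_of_one_le_left hsT.le h2)
  choose S hS hScard using hbox
  have hγ : ∀ p ∈ F, ∃ γ : QS n, γ ∈ (Finset.range Lb).biUnion S ∧ ∃ hp : good n p,
      Ideal.span {γ} * gI hq = Ideal.span {zc (q.1:ℤ)} * gI hp := by
    intro p hpF
    obtain ⟨hpX, hp, hrel⟩ := hF p hpF
    obtain ⟨γ₀, h1, h2, h3, h4⟩ := exists_gamma hp hq hrel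
    obtain ⟨γ, g1, g2, g3, g4, g5⟩ := exists_normalized hn h3
    refine ⟨γ, ?_, hp, by rw [g1, h4]⟩
    have hN : |s1 γ| * |s2 γ| ≤ T := by
      rw [← abs_mul, g2, s1_mul_s2, ← Int.cast_abs, h1]
      push_cast
      rw [hT]
      gcongr
    have hmem : γ ∈ gI' hq := by
      have : γ ∈ Ideal.span {γ₀} := by rw [← g1]; exact Ideal.mem_span_singleton_self _
      exact ((Ideal.span_singleton_le_iff_mem _).mpr h2) this
    rw [gI', mem_latI] at hmem
    obtain ⟨i, hi1, hi2⟩ := exists_nat_pow_near (x := |s1 γ| / |s2 γ|) (y := (4:ℝ)) ((one_le_div g5).mpr g3) (by norm_num)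
    rw [le_div_iff₀ g5] at hi1
    rw [div_lt_iff₀ g5] at hi2
    have e4 : ∀ j : ℕ, (4:ℝ)^j = 2^j * 2^j := fun j => by rw [← mul_pow]; norm_num
    rw [e4] at hi1 hi2
    have p1 : (0:ℝ) < 2^i := by positivity
    have p2 : (0:ℝ) < 2^(i+1) := by positivity
    rw [Finset.mem_biUnion]
    refine ⟨i, ?_, hS i γ hmem ?_ ?_⟩
    · rw [Finset.mem_range, hLb, Nat.lt_succ_iff]
      apply Nat.le_log_of_pow_le (by norm_num)
      have h5 : (2:ℝ)^i < ep n := by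
        have : (2:ℝ)^i * 2^i < ep n ^ 2 := lt_of_mul_lt_mul_right (hi1.trans_lt g4) g5.le
        rw [← pow_two] at this
        exact lt_of_pow_lt_pow_left₀ 2 (ep_pos n).le this
      have h6 : (2:ℝ)^i ≤ ((n+1 : ℕ):ℝ) := by push_cast; linarith [ep_le n]
      exact_mod_cast h6
    · apply abs_le_of_sq_le_sq' _ (by positivity) |>.2
      have : |s1 γ|^2 ≤ (2^(i+1) * √T)^2 := by
        calc |s1 γ|^2 ≤ |s1 γ| * (2^(i+1)*2^(i+1) * |s2 γ|) := by
              rw [pow_two]; gcongr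
          _ = 2^(i+1)*2^(i+1) * (|s1 γ| * |s2 γ|) := by ring
          _ ≤ 2^(i+1)*2^(i+1) * T := by gcongr
          _ = _ := by rw [mul_pow, pow_two (√T), hTT]; ring
      exact this
    · apply abs_le_of_sq_le_sq' _ (by positivity) |>.2
      have : |s2 γ|^2 ≤ (√T / 2^i)^2 := by
        rw [div_pow, pow_two (√T), hTT, le_div_iff₀ (by positivity)]
        calc |s2 γ|^2 * (2^i)^2 = (2^i * 2^i * |s2 γ|) * |s2 γ| := by ring
          _ ≤ |s1 γ| * |s2 γ| := by gcongr
          _ ≤ T := hN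
      exact this
  have hcard : F.card ≤ ((Finset.range Lb).biUnion S).card := by
    choose! g hg1 hg2 using hγ
    refine Finset.card_le_card_of_injOn g (fun p hp => hg1 p hp) ?_
    intro p hp p' hp' hpp
    obtain ⟨a, ha⟩ := hg2 p hp
    obtain ⟨b, hb⟩ := hg2 p' hp'
    have hpp' : g p = g p' := hpp
    rw [hpp', hb] at ha
    have hz : (zc (q.1:ℤ) : QS n) ≠ 0 := zc_ne (by have := hq.1; positivity)
    exact (gI_inj b a ((Ideal.span_singleton_mul_right_inj hz).mp ha)).symm
  have hsX1 : 1 ≤ √(X:ℝ) := Real.one_le_sqrt.mpr hX1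
  calc (F.card : ℝ) ≤ (((Finset.range Lb).biUnion S).card : ℝ) := by exact_mod_cast hcard
    _ ≤ ((∑ i ∈ Finset.range Lb, (S i).card : ℕ) : ℝ) := by exact_mod_cast Finset.card_biUnion_le
    _ = ∑ i ∈ Finset.range Lb, ((S i).card : ℝ) := by push_cast; rfl
    _ ≤ ∑ i ∈ Finset.range Lb, ((16 / rD n) * X + (4 * (2^(i+1) * √q.1) / rD n + 2 * (√q.1 / 2^i) / q.1 + 1) * √X) := by
        refine Finset.sum_le_sum fun i _ => (hScard i).trans ?_
        have eT : √T = √X * √q.1 := Real.sqrt_mul hX0.le _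
        have hqq : √(q.1:ℝ) * √q.1 = q.1 := Real.mul_self_sqrt hq0.le
        have hXX : √(X:ℝ) * √X = X := Real.mul_self_sqrt hX0.le
        have e : (4 * (2^(i+1) * √T) / rD n + 1) * (2 * (√T / 2^i) / q.1 + 1) =
          (16 / rD n) * X + (4 * (2^(i+1) * √q.1) / rD n + 2 * (√q.1 / 2^i) / q.1) * √X + 1 := by
          rw [eT]
          have : (2:ℝ)^i ≠ 0 := by positivity
          rw [pow_succ]
          have h16 : 16 / rD n * (X:ℝ) = 16 / rD n * (√X * √X) * ((√q.1 * √q.1) / q.1) := by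
            rw [hqq, hXX, div_self hq0.ne', mul_one]
          rw [h16]
          field_simp
          ring
        rw [e]
        nlinarith
    _ = _ := by
        rw [Finset.sum_add_distrib, Finset.sum_const, Finset.card_range, nsmul_eq_mul, Finset.sum_mul]
        rw [hLb]; push_cast; ring

/-- number of primitive ideals of norm m, for m coprime to the discriminant -/
def rho (n m : ℕ) : ℕ := if m.Coprime (n^2+4) then
  ((Finset.range m).filter fun k : ℕ => (m:ℤ) ∣ (k:ℤ)^2 + n * k - 1).card else 0

lemma rho_sum_le (hn : 1 ≤ n) : ∃ B : ℝ, 0 ≤ B ∧ ∀ X : ℕ, 1 ≤ X →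
    ((∑ m ∈ Finset.Icc 1 X, rho n m : ℕ) : ℝ) ≤
      classNumber ((n:ℤ)^2+4) * (Nat.log 2 (n+1) + 1) * (16 / rD n) * X + B * √X := by
  classical
  have hdom := isDomain hn
  obtain ⟨hfin, -⟩ := finite_and_card hn
  have := Fintype.ofFinite (ClassGroup (QS n))
  rw [classNumber_eq hn]
  obtain ⟨cls, hcls⟩ := exists_cls n
  have key : ∀ c : ClassGroup (QS n), ∃ B : ℝ, 0 ≤ B ∧ ∀ X : ℕ, 1 ≤ X → ∀ F : Finset (ℕ × ℕ),
      (∀ p ∈ F, p.1 ≤ X ∧ good n p ∧ cls p = c) →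
      (F.card : ℝ) ≤ (Nat.log 2 (n+1) + 1) * (16 / rD n) * X + B * √X := by
    intro c
    by_cases h : ∃ q, good n q ∧ cls q = c
    · obtain ⟨q, hq, hqc⟩ := h
      obtain ⟨B, hB, h⟩ := fib_count hn hq
      refine ⟨B, hB, fun X hX F hF => h X hX F fun p hp => ?_⟩
      obtain ⟨h1, h2, h3⟩ := hF p hp
      exact ⟨h1, h2, hcls p q h2 hq (h3.trans hqc.symm)⟩
    · refine ⟨0, le_rfl, fun X hX F hF => ?_⟩
      have : F = ∅ := by
        rw [Finset.eq_empty_iff_forall_notMem]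
        exact fun p hp => h ⟨p, (hF p hp).2⟩
      rw [this]
      have := rD_pos n
      simp only [Finset.card_empty, Nat.cast_zero]
      positivity
  choose B hB0 hB using key
  refine ⟨∑ c, B c, Finset.sum_nonneg fun c _ => hB0 c, fun X hX => ?_⟩
  set P : Finset (ℕ × ℕ) := (Finset.Icc 1 X ×ˢ Finset.range X).filter (fun p => good n p) with hP
  have h1 : ∑ m ∈ Finset.Icc 1 X, rho n m = P.card := by
    rw [Finset.card_eq_sum_card_fiberwise (f := Prod.fst) (t := Finset.Icc 1 X)]
    · refine Finset.sum_congr rfl fun m hm => ?_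
      rw [Finset.mem_Icc] at hm
      rw [rho]
      split_ifs with hc
      · refine Finset.card_bij (fun k _ => (m, k)) ?_ ?_ ?_
        · intro k hk
          simp only [Finset.mem_filter, Finset.mem_range] at hk
          simp only [hP, Finset.mem_filter, Finset.mem_product, Finset.mem_Icc, Finset.mem_range, and_true]
          exact ⟨⟨hm, hk.1.trans_le hm.2⟩, hm.1, hc, hk.1, hk.2⟩
        · intro k _ k' _ h
          exact (Prod.ext_iff.mp h).2
        · rintro ⟨a, k⟩ hk
          simp only [hP, Finset.mem_filter] at hk
          obtain ⟨⟨-, hg⟩, rfl⟩ := hk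
          refine ⟨k, ?_, rfl⟩
          simp only [Finset.mem_filter, Finset.mem_range]
          exact ⟨hg.2.2.1, hg.2.2.2⟩
      · symm
        rw [Finset.card_eq_zero, Finset.eq_empty_iff_forall_notMem]
        rintro ⟨a, k⟩ hk
        simp only [hP, Finset.mem_filter] at hk
        obtain ⟨⟨-, hg⟩, rfl⟩ := hk
        exact hc hg.2.1
    · intro p hp
      have hp' : p ∈ P := hp
      simp only [hP, Finset.mem_filter, Finset.mem_product] at hp'
      exact hp'.1.1
  rw [h1, Finset.card_eq_sum_card_fiberwise (f := cls) (t := Finset.univ) (fun _ _ => by simp)]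
  push_cast
  calc ∑ c, ((P.filter fun p => cls p = c).card : ℝ) ≤ ∑ c, ((Nat.log 2 (n+1) + 1) * (16 / rD n) * X + B c * √X) := by
        refine Finset.sum_le_sum fun c _ => hB c X hX _ ?_
        intro p hp
        simp only [hP, Finset.mem_filter, Finset.mem_product, Finset.mem_Icc] at hp
        exact ⟨hp.1.1.1.2, hp.1.2, hp.2⟩
    _ = _ := by
        rw [Finset.sum_add_distrib, Finset.sum_const, Finset.card_univ, nsmul_eq_mul, Finset.sum_mul,
          Nat.card_eq_fintype_card]
        ring
end QS

end

section

open DirichletCharacter (zetaMul LFunction)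
open Filter
open scoped NumberTheorySymbols

/-- value function of Jacobi character -/
def jacV (D b : ℕ) : ℤ := if Odd b then J((D:ℤ) | b) else 0

lemma jacV_mod (D b : ℕ) : jacV D (b % (4*D)) = jacV D b := by
  have h : Odd (b % (4*D)) ↔ Odd b := by
    rw [Nat.odd_iff, Nat.odd_iff, Nat.mod_mod_of_dvd _ (Dvd.intro _ (by ring : 2 * (2*D) = 4*D))]
  by_cases hb : Odd b
  · rw [jacV, jacV, if_pos hb, if_pos (h.mpr hb), ← jacobiSym.mod_right' D hb]
  · rw [jacV, jacV, if_neg hb, if_neg (fun h' => hb (h.mp h'))]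

lemma jacV_mul (D a b : ℕ) : jacV D (a * b) = jacV D a * jacV D b := by
  simp only [jacV, Nat.odd_mul]
  by_cases ha : Odd a <;> by_cases hb : Odd b <;> simp only [ha, hb, and_true, and_false, if_true, if_false, mul_zero, zero_mul]
  exact jacobiSym.mul_right' _ ha.pos.ne' hb.pos.ne'

def jacChar (D : ℕ) [NeZero D] : DirichletCharacter ℂ (4*D) where
  toFun a := ((jacV D a.val : ℤ) : ℂ)
  map_one' := by
    have h : ((1 : ZMod (4*D))).val = 1 % (4*D) := ZMod.val_one_eq_one_mod _
    rw [h, jacV_mod]; simp [jacV]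
  map_mul' a b := by
    rw [ZMod.val_mul, jacV_mod, jacV_mul]; push_cast; rfl
  map_nonunit' a ha := by
    have : ¬ Nat.Coprime a.val (4*D) := by
      rw [← ZMod.isUnit_iff_coprime, ZMod.natCast_zmod_val]; exact ha
    rw [jacV]
    split_ifs with h
    · rw [jacobiSym.eq_zero_iff.mpr ⟨h.pos.ne', ?_⟩, Int.cast_zero]
      intro hg
      apply this
      have h4 : Nat.Coprime a.val 4 := (Nat.coprime_pow_right_iff (n := 2) (by norm_num) a.val 2).mpr (Nat.coprime_two_right.mpr h)
      refine Nat.Coprime.mul_right h4 ?_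
      rw [Int.gcd_natCast_natCast] at hg
      exact (Nat.coprime_comm.mp hg)
    · simp

lemma jacChar_nat (D : ℕ) [NeZero D] (b : ℕ) : jacChar D (b : ZMod (4*D)) = ((jacV D b : ℤ) : ℂ) := by
  show ((jacV D (b : ZMod (4*D)).val : ℤ) : ℂ) = _
  rw [ZMod.val_natCast, jacV_mod]

lemma jacChar_sq (D : ℕ) [NeZero D] : jacChar D ^ 2 = 1 := by
  rw [← MulChar.isQuadratic_iff_sq_eq_one]
  intro a
  obtain ⟨b, rfl⟩ := ZMod.natCast_zmod_surjective a
  rw [jacChar_nat, jacV]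
  split_ifs
  · rcases jacobiSym.trichotomy (D:ℤ) b with h | h | h <;> simp [h]
  · simp

lemma zetaMul_prime {N : ℕ} (χ : DirichletCharacter ℂ N) {p : ℕ} (hp : p.Prime) :
    zetaMul χ p = 1 + χ p := by
  rw [zetaMul_eq, ArithmeticFunction.coe_zeta_mul_apply, hp.sum_divisors, chA_apply _ _ one_ne_zero,
    chA_apply _ _ hp.ne_zero]
  simp; ring

namespace QS
lemma rho_mul (n : ℕ) {a b : ℕ} (h : a.Coprime b) (ha0 : a ≠ 0) (hb0 : b ≠ 0) : rho n a * rho n b ≤ rho n (a * b) := by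
  by_cases ha : a.Coprime (n^2+4)
  swap
  · simp [rho, ha]
  by_cases hb : b.Coprime (n^2+4)
  swap
  · simp [rho, hb]
  rw [rho, rho, rho, if_pos ha, if_pos hb, if_pos (Nat.Coprime.mul_left ha hb), ← Finset.card_product]
  refine Finset.card_le_card_of_injOn (fun k => (Nat.chineseRemainder h k.1 k.2 : ℕ)) ?_ ?_
  · intro k hk
    have hk' := Finset.mem_product.mp hk
    simp only [Finset.mem_filter, Finset.mem_range] at hk'
    obtain ⟨⟨h1, h2⟩, h3, h4⟩ := hk'
    show _ ∈ ((Finset.range (a*b)).filter _)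
    rw [Finset.mem_filter, Finset.mem_range]
    refine ⟨Nat.chineseRemainder_lt_mul h _ _ ha0 hb0, ?_⟩
    have hc := (Nat.chineseRemainder h k.1 k.2).2
    push_cast
    have key : ∀ (c x y : ℕ), x ≡ y [MOD c] → (c:ℤ) ∣ (y:ℤ)^2 + n*y-1 → (c:ℤ) ∣ (x:ℤ)^2 + n*x-1 := by
      intro c x y hxy hd
      have e := (Nat.modEq_iff_dvd.mp hxy)
      rw [show (x:ℤ)^2 + n*x-1 = (y:ℤ)^2 + n*y-1 - (y - x) * (x + y + n) by ring]
      exact dvd_sub hd (Dvd.dvd.mul_right e _)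
    exact IsCoprime.mul_dvd (Nat.isCoprime_iff_coprime.mpr h) (key _ _ _ hc.1 h2) (key _ _ _ hc.2 h4)
  · intro k hk k' hk' he
    have hk := Finset.mem_product.mp hk
    have hk' := Finset.mem_product.mp hk'
    simp only [Finset.mem_filter, Finset.mem_range] at hk hk'
    have hc := (Nat.chineseRemainder h k.1 k.2).2
    have hc' := (Nat.chineseRemainder h k'.1 k'.2).2
    have he' : (Nat.chineseRemainder h k.1 k.2 : ℕ) = (Nat.chineseRemainder h k'.1 k'.2 : ℕ) := he
    rw [he'] at hc
    apply Prod.ext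
    · exact Nat.ModEq.eq_of_lt_of_lt (hc.1.symm.trans hc'.1) hk.1.1 hk'.1.1
    · exact Nat.ModEq.eq_of_lt_of_lt (hc.2.symm.trans hc'.2) hk.2.1 hk'.2.1

lemma rho_prime (n : ℕ) {p : ℕ} (hp : p.Prime) (hpo : Odd p) (hpD : p.Coprime (n^2+4)) 
    (hJ : J(((n^2+4 : ℕ):ℤ) | p) = 1) : 2 ≤ rho n p := by
  have := Fact.mk hp
  rw [rho, if_pos hpD]
  have h2 : (2 : ZMod p) ≠ 0 := by
    have : ((2:ℕ) : ZMod p) ≠ 0 := by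
      rw [Ne, ZMod.natCast_eq_zero_iff]
      intro h
      have := (Nat.prime_dvd_prime_iff_eq hp Nat.prime_two).mp h
      subst this
      exact absurd hpo (by decide)
    exact_mod_cast this
  have hD : ((n^2+4 : ℕ) : ZMod p) ≠ 0 := by
    rw [Ne, ZMod.natCast_eq_zero_iff]
    exact (Nat.Prime.coprime_iff_not_dvd hp).mp hpD
  obtain ⟨y, hy⟩ := ZMod.isSquare_of_jacobiSym_eq_one hJ
  have hy' : (n:ZMod p)^2 + 4 = y * y := by push_cast at hy; exact hy
  have hy0 : y ≠ 0 := by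
    rintro rfl
    apply hD; push_cast; rw [hy']; ring
  have hmem : ∀ z : ZMod p, z * z = (n:ZMod p)^2 + 4 → ((z - n)/2).val ∈ (Finset.range p).filter fun k : ℕ => (p:ℤ) ∣ (k:ℤ)^2 + n * k - 1 := by
    intro z hz
    rw [Finset.mem_filter, Finset.mem_range]
    refine ⟨ZMod.val_lt _, ?_⟩
    rw [← ZMod.intCast_zmod_eq_zero_iff_dvd]
    push_cast
    rw [ZMod.natCast_zmod_val]
    have h4 : (4:ZMod p) ≠ 0 := by
      have : (4:ZMod p) = 2 * 2 := by norm_num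
      rw [this]; exact mul_ne_zero h2 h2
    apply mul_left_cancel₀ h4
    set w := (z - n)/2 with hw
    have hw2 : 2 * w = z - n := by rw [hw]; field_simp
    linear_combination (2*w + n + z) * hw2 + hz
  show 1 < _
  refine Finset.one_lt_card.mpr ⟨_, hmem y hy'.symm, _, hmem (-y) (by rw [hy']; ring), fun he => ?_⟩
  have := ZMod.val_injective p he
  rw [div_left_inj' h2] at this
  have h3 : 2 * y = 0 := by linear_combination this
  exact (mul_ne_zero h2 hy0) h3

lemma norm_zetaMul_le (n : ℕ) [NeZero (n^2+4)] (s : ℕ) : Squarefree s → s.Coprime (4*(n^2+4)) →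
    ‖zetaMul (jacChar (n^2+4)) s‖ ≤ rho n s := by
  induction s using induction_on_primes with
  | zero => intro h; exact absurd h not_squarefree_zero
  | one =>
    intro _ _
    have : zetaMul (jacChar (n^2+4)) 1 = 1 := (DirichletCharacter.isMultiplicative_zetaMul _).1
    rw [this]
    simp [rho]
  | prime_mul p a hp ih =>
    intro hs hc
    obtain ⟨hcop, -, hsa⟩ := Nat.squarefree_mul_iff.mp hs
    obtain ⟨hcp, hca⟩ := Nat.coprime_mul_iff_left.mp hc
    have ha0 : a ≠ 0 := hsa.ne_zero
    rw [(DirichletCharacter.isMultiplicative_zetaMul _).2 hcop, norm_mul]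
    have hpo : Odd p := by
      rcases hp.eq_two_or_odd' with h | h
      · subst h
        have := (Nat.coprime_mul_iff_right.mp hcp).1
        revert this; decide
      · exact h
    have hpD := (Nat.coprime_mul_iff_right.mp hcp).2
    have h1 : ‖zetaMul (jacChar (n^2+4)) p‖ ≤ rho n p := by
      rw [zetaMul_prime _ hp, jacChar_nat, jacV, if_pos hpo]
      have hg : Int.gcd ((n^2+4 : ℕ):ℤ) p = 1 := by
        rw [Int.gcd_natCast_natCast]; exact hpD.symm
      rcases jacobiSym.eq_one_or_neg_one hg with h | h
      · rw [h]
        have := rho_prime n hp hpo hpD h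
        have h2 : (2:ℝ) ≤ rho n p := by exact_mod_cast this
        refine le_trans ?_ h2
        norm_num
      · rw [h]; simp
    calc _ ≤ (rho n p : ℝ) * rho n a := by
          gcongr; exact ih hsa hca
      _ ≤ _ := by exact_mod_cast rho_mul n hcop hp.ne_zero ha0
end QS

end

section

open DirichletCharacter (zetaMul LFunction)
open Filter

lemma zetaMul_prime_pow {N : ℕ} (χ : DirichletCharacter ℂ N) {p : ℕ} (hp : p.Prime) (k : ℕ) :
    zetaMul χ (p^k) = ∑ i ∈ Finset.range (k+1), χ p ^ i := by
  rw [zetaMul_eq, ArithmeticFunction.coe_zeta_mul_apply, Nat.sum_divisors_prime_pow hp]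
  exact Finset.sum_congr rfl fun i _ => chA_prime_pow χ hp i

lemma zetaMul_decomp {N : ℕ} (χ : DirichletCharacter ℂ N) (hχ : χ^2 = 1) (m : ℕ) :
    ∃ s t : ℕ, m = s * t^2 ∧ (m ≠ 0 → Squarefree s) ∧
      ‖zetaMul χ m‖ ≤ ‖zetaMul χ s‖ * ((t^2).divisors.card : ℝ) := by
  have hmul := DirichletCharacter.isMultiplicative_zetaMul χ
  induction m using Nat.recOnPosPrimePosCoprime with
  | zero => exact ⟨0, 0, by simp, by simp, by simp⟩
  | one => exact ⟨1, 1, by simp, by simp, by simp⟩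
  | prime_pow p k hp hk =>
    have hcard : ∀ j, ((p^j)^2).divisors.card = 2 * j + 1 := by
      intro j; rw [← pow_mul, Nat.divisors_prime_pow hp, Finset.card_map, Finset.card_range]; ring
    rcases Nat.even_or_odd' k with ⟨j, rfl | rfl⟩
    · refine ⟨1, p^j, by ring, fun _ => squarefree_one, ?_⟩
      rw [hmul.1, norm_one, one_mul, hcard, zetaMul_prime_pow χ hp]
      refine (norm_sum_le _ _).trans ?_
      calc _ ≤ ∑ i ∈ Finset.range (2*j+1), (1:ℝ) := Finset.sum_le_sum fun i _ => by
            rw [norm_pow]; exact pow_le_one₀ (norm_nonneg _) (DirichletCharacter.norm_le_one χ _)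
        _ = _ := by simp
    · refine ⟨p, p^j, by ring, fun _ => hp.prime.squarefree, ?_⟩
      rw [hcard, zetaMul_prime_pow χ hp, zetaMul_prime χ hp]
      rcases MulChar.isQuadratic_iff_sq_eq_one.mpr hχ p with h | h | h
      · rw [h, Finset.sum_range_succ']
        simp
      · rw [h]
        simp only [one_pow, Finset.sum_const, Finset.card_range, nsmul_eq_mul, mul_one]
        rw [Complex.norm_natCast, show (1:ℂ)+1 = 2 by norm_num, Complex.norm_ofNat]
        push_cast
        linarith [(Nat.cast_nonneg j : (0:ℝ) ≤ j)]
      · rw [h, neg_one_geom_sum, if_pos (by rw [Nat.even_add_one]; simp [parity_simps])]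
        simp
  | coprime a b ha hb hab iha ihb =>
    obtain ⟨s, t, h1, h2, h3⟩ := iha
    obtain ⟨s', t', h1', h2', h3'⟩ := ihb
    have hs := h2 (by omega)
    have hs' := h2' (by omega)
    have css : s.Coprime s' := Nat.Coprime.of_dvd (Dvd.intro _ h1.symm) (Dvd.intro _ h1'.symm) hab
    have ctt : (t^2).Coprime (t'^2) := Nat.Coprime.of_dvd (Dvd.intro_left _ h1.symm) (Dvd.intro_left _ h1'.symm) hab
    refine ⟨s * s', t * t', by rw [h1, h1']; ring, fun _ => (Nat.squarefree_mul css).mpr ⟨hs, hs'⟩, ?_⟩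
    rw [hmul.2 hab, hmul.2 css, mul_pow, ctt.card_divisors_mul, norm_mul, norm_mul]
    push_cast
    calc _ ≤ (‖zetaMul χ s‖ * ((t^2).divisors.card : ℝ)) * (‖zetaMul χ s'‖ * ((t'^2).divisors.card : ℝ)) := by gcongr
      _ = _ := by ring

lemma G_summable : Summable fun t : ℕ => ((t^2).divisors.card : ℝ) * (t:ℝ)^(-2:ℝ) := by
  obtain ⟨C, hC1, hC⟩ := divisor_bound (1/4) (by norm_num)
  have h := (Real.summable_nat_rpow (p := -(3/2))).mpr (by norm_num)
  refine Summable.of_nonneg_of_le (fun t => by positivity) (fun t => ?_) (h.mul_left C)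
  rcases Nat.eq_zero_or_pos t with rfl | ht
  · simp
  have ht' : (0:ℝ) < t := by exact_mod_cast ht
  calc ((t^2).divisors.card : ℝ) * (t:ℝ)^(-2:ℝ) ≤ (C * ((t^2:ℕ):ℝ)^(1/4:ℝ)) * (t:ℝ)^(-2:ℝ) := by
        gcongr; exact hC _
    _ = _ := by
        push_cast
        rw [← Real.rpow_natCast (t:ℝ) 2, ← Real.rpow_mul ht'.le, mul_assoc, ← Real.rpow_add ht']
        norm_num

/-- the constant `G` -/
def Gc : ℝ := ∑' t : ℕ, ((t^2).divisors.card : ℝ) * (t:ℝ)^(-2:ℝ)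
lemma Gc_nonneg : 0 ≤ Gc := tsum_nonneg fun t => by positivity

open MeasureTheory in
lemma rho_series (f : ℕ → ℝ) (hf : ∀ m, 0 ≤ f m) (hf0 : f 0 = 0) (K B : ℝ) (hB : 0 ≤ B) 
    (h : ∀ X : ℕ, 1 ≤ X → ∑ m ∈ Finset.Icc 1 X, f m ≤ K * X + B * √X) (hK : 0 ≤ K) {σ : ℝ} (hσ : 1 < σ) :
    Summable (fun m : ℕ => f m * (m:ℝ)^(-σ)) ∧
    ∑' m : ℕ, f m * (m:ℝ)^(-σ) ≤ σ * (K / (σ-1) + B / (σ - 1/2)) := by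
  have hO : (fun k : ℕ => ∑ m ∈ Finset.Icc 1 k, f m) =O[atTop] fun k : ℕ => (k:ℝ)^(1:ℝ) := by
    refine Asymptotics.IsBigO.of_bound (K + B) ?_
    filter_upwards [eventually_ge_atTop 1] with X hX
    have hX1 : (1:ℝ) ≤ X := by exact_mod_cast hX
    rw [Real.rpow_one, Real.norm_of_nonneg (Finset.sum_nonneg fun _ _ => hf _), Real.norm_of_nonneg (by positivity)]
    refine (h X hX).trans ?_
    have : √(X:ℝ) ≤ X := Real.sqrt_le_iff.mpr ⟨by linarith, by nlinarith⟩
    nlinarith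
  have hterm : ∀ m : ℕ, LSeries.term (fun k => (f k : ℂ)) σ m = ((f m * (m:ℝ)^(-σ) : ℝ) : ℂ) := by
    intro m
    rcases eq_or_ne m 0 with rfl | hm
    · simp [hf0]
    rw [LSeries.term_of_ne_zero hm, Complex.ofReal_mul, Complex.ofReal_cpow (by positivity), div_eq_mul_inv]
    push_cast
    rw [Complex.cpow_neg]
  have hs : LSeriesSummable (fun k => (f k : ℂ)) σ :=
    LSeriesSummable_of_sum_norm_bigO_and_nonneg hO hf (by norm_num) (by simpa using hσ)
  have hsum : Summable (fun m : ℕ => f m * (m:ℝ)^(-σ)) := by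
    have := hs
    rw [LSeriesSummable] at this
    simp only [funext hterm] at this
    exact_mod_cast this
  refine ⟨hsum, ?_⟩
  have hI := LSeries_eq_mul_integral_of_nonneg f (r := 1) (by norm_num) (s := σ) (by simpa using hσ) hO hf
  have hL : LSeries (fun k => (f k : ℂ)) σ = ((∑' m : ℕ, f m * (m:ℝ)^(-σ) : ℝ) : ℂ) := by
    rw [LSeries, Complex.ofReal_tsum]
    exact tsum_congr hterm
  rw [hL] at hI
  have hg : IntegrableOn (fun t : ℝ => K * t^(-σ) + B * t^(-σ-1/2)) (Set.Ioi 1) := by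
    refine Integrable.add ?_ ?_
    · exact (integrableOn_Ioi_rpow_of_lt (by linarith) one_pos).const_mul _
    · exact (integrableOn_Ioi_rpow_of_lt (by linarith) one_pos).const_mul _
  have hgi : ∫ t in Set.Ioi (1:ℝ), (K * t^(-σ) + B * t^(-σ-1/2)) = K / (σ-1) + B / (σ-1/2) := by
    rw [integral_add, integral_const_mul, integral_const_mul, integral_Ioi_rpow_of_lt (by linarith) one_pos, integral_Ioi_rpow_of_lt (by linarith) one_pos]
    · rw [Real.one_rpow, Real.one_rpow]
      congr 1
      · rw [show -σ + 1 = -(σ-1) by ring, neg_div_neg_eq]; ring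
      · rw [show -σ -1/2 + 1 = -(σ-1/2) by ring, neg_div_neg_eq]; ring
    · exact (integrableOn_Ioi_rpow_of_lt (by linarith) one_pos).const_mul _
    · exact (integrableOn_Ioi_rpow_of_lt (by linarith) one_pos).const_mul _
  calc ∑' m : ℕ, f m * (m:ℝ)^(-σ) ≤ ‖((∑' m : ℕ, f m * (m:ℝ)^(-σ) : ℝ) : ℂ)‖ := by
        rw [Complex.norm_real]; exact le_abs_self _
    _ = σ * ‖∫ t in Set.Ioi (1:ℝ), (∑ k ∈ Finset.Icc 1 ⌊t⌋₊, (f k : ℂ)) * (t:ℂ)^(-((σ:ℂ)+1))‖ := by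
        rw [hI, norm_mul, Complex.norm_real, Real.norm_of_nonneg (by linarith)]
    _ ≤ σ * (K / (σ-1) + B / (σ - 1/2)) := by
        rw [← hgi]
        gcongr
        refine norm_integral_le_of_norm_le hg ?_
        refine (ae_restrict_iff' measurableSet_Ioi).mpr (Eventually.of_forall fun t ht => ?_)
        have ht1 : (1:ℝ) < t := ht
        have ht0 : 0 < t := by linarith
        rw [norm_mul, Complex.norm_cpow_eq_rpow_re_of_pos ht0, ← Complex.ofReal_sum, Complex.norm_real,
          Real.norm_of_nonneg (Finset.sum_nonneg fun _ _ => hf _)]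
        have hfl : (⌊t⌋₊:ℝ) ≤ t := Nat.floor_le ht0.le
        have h1 := h ⌊t⌋₊ (Nat.one_le_floor_iff _ |>.mpr ht1.le)
        have h2 : ∑ m ∈ Finset.Icc 1 ⌊t⌋₊, f m ≤ K * t + B * √t := by
          refine h1.trans ?_
          gcongr
        have e : (-((σ:ℂ)+1)).re = -σ-1 := by simp; ring
        rw [e]
        calc _ ≤ (K * t + B * √t) * t^(-σ-1) := by gcongr
          _ = K * (t^(1:ℝ) * t^(-σ-1)) + B * (t^(1/2:ℝ) * t^(-σ-1)) := by
              rw [Real.rpow_one, Real.sqrt_eq_rpow]; ring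
          _ = _ := by
              rw [← Real.rpow_add ht0, ← Real.rpow_add ht0]; congr 3 <;> ring

end

section

open DirichletCharacter (zetaMul LFunction LFunctionTrivChar₁)
open Filter Topology

lemma trivProd_eq {N : ℕ} (χ : DirichletCharacter ℂ N) :
    chA (1 : DirichletCharacter ℂ N) * chA χ = (chA (1 : DirichletCharacter ℂ N)).pmul (zetaMul χ) := by
  rw [zetaMul_eq, chA_pmul_mul, ArithmeticFunction.pmul_zeta]
  congr 1
  ext m
  rcases eq_or_ne m 0 with rfl | hm
  · simp
  · rw [ArithmeticFunction.pmul_apply, chA_apply _ _ hm, chA_apply _ _ hm, ← MulChar.mul_apply, one_mul]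

lemma L_prod_le (n : ℕ) [NeZero (n^2+4)] {σ : ℝ} (hσ : 1 < σ)
    (hs : Summable (fun m : ℕ => (QS.rho n m : ℝ) * (m:ℝ)^(-σ))) :
    ‖LFunction (1 : DirichletCharacter ℂ (4*(n^2+4))) σ * LFunction (jacChar (n^2+4)) σ‖ ≤
      (∑' m : ℕ, (QS.rho n m : ℝ) * (m:ℝ)^(-σ)) * Gc := by
  set χ := jacChar (n^2+4) with hχ
  have hσ' : 1 < (σ:ℂ).re := by simpa using hσ
  have hsum := ArithmeticFunction.LSeriesSummable_mul (chA_summable (1 : DirichletCharacter ℂ (4*(n^2+4))) hσ') (chA_summable χ hσ')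
  rw [← chA_LSeries _ hσ', ← chA_LSeries _ hσ',
    ← ArithmeticFunction.LSeries_mul' (chA_summable (1 : DirichletCharacter ℂ (4*(n^2+4))) hσ') (chA_summable χ hσ')]
  choose s t h1 h2 h3 using zetaMul_decomp χ (jacChar_sq _)
  set F : ℕ × ℕ → ℝ := fun x => ((QS.rho n x.1 : ℝ) * (x.1:ℝ)^(-σ)) * (((x.2^2).divisors.card : ℝ) * (x.2:ℝ)^(-2:ℝ)) with hF
  have hFs : Summable F := Summable.mul_of_nonneg hs G_summable 
    (fun _ => mul_nonneg (Nat.cast_nonneg _) (Real.rpow_nonneg (Nat.cast_nonneg _) _))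
    (fun _ => mul_nonneg (Nat.cast_nonneg _) (Real.rpow_nonneg (Nat.cast_nonneg _) _))
  have hF0 : ∀ x, 0 ≤ F x := fun x => mul_nonneg (mul_nonneg (Nat.cast_nonneg _) (Real.rpow_nonneg (Nat.cast_nonneg _) _)) (mul_nonneg (Nat.cast_nonneg _) (Real.rpow_nonneg (Nat.cast_nonneg _) _))
  rw [Gc, hs.tsum_mul_tsum G_summable hFs]
  refine (norm_tsum_le_tsum_norm hsum.norm).trans ?_
  refine Summable.tsum_le_tsum_of_inj (fun m => (s m, t m)) ?_ (fun _ _ => hF0 _) ?_ hsum.norm hFs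
  · intro m m' he
    obtain ⟨e1, e2⟩ := Prod.ext_iff.mp he
    simp only at e1 e2
    rw [h1 m, h1 m', e1, e2]
  · intro m
    rcases eq_or_ne m 0 with rfl | hm
    · rw [LSeries.term_zero, norm_zero]; exact hF0 _
    rw [LSeries.norm_term_eq, if_neg hm, trivProd_eq, ArithmeticFunction.pmul_apply, chA_apply _ _ hm, norm_mul]
    by_cases hc : m.Coprime (4*(n^2+4))
    · have hst : s m ≠ 0 ∧ t m ≠ 0 := by
        constructor <;> intro h0 <;> apply hm <;> rw [h1 m, h0] <;> simp
      have hs0 : (0:ℝ) < s m := by exact_mod_cast Nat.pos_of_ne_zero hst.1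
      have ht1 : (1:ℝ) ≤ t m := by exact_mod_cast Nat.pos_of_ne_zero hst.2
      have hz := QS.norm_zetaMul_le n (s m) (h2 m hm) (Nat.Coprime.coprime_dvd_left (Dvd.intro _ (h1 m).symm) hc)
      have hle := h3 m
      have hpow : 1 / (m:ℝ)^(σ:ℂ).re ≤ (s m:ℝ)^(-σ) * (t m:ℝ)^(-2:ℝ) := by
        have e : (m:ℝ) = s m * (t m:ℝ)^2 := by exact_mod_cast h1 m
        rw [Complex.ofReal_re, one_div, ← Real.rpow_neg (by positivity), e, Real.mul_rpow hs0.le (by positivity)]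
        gcongr
        rw [← Real.rpow_natCast, ← Real.rpow_mul (by linarith)]
        apply Real.rpow_le_rpow_of_exponent_le ht1
        push_cast; linarith
      calc _ ≤ (1 * (‖zetaMul χ (s m)‖ * (((t m)^2).divisors.card : ℝ))) * (1 / (m:ℝ)^(σ:ℂ).re) := by
            rw [div_eq_mul_one_div]
            gcongr
            exact DirichletCharacter.norm_le_one _ _
        _ ≤ (1 * (QS.rho n (s m) * (((t m)^2).divisors.card : ℝ))) * ((s m:ℝ)^(-σ) * (t m:ℝ)^(-2:ℝ)) := by
            have hz' := mul_le_mul_of_nonneg_right hz (Nat.cast_nonneg (α := ℝ) ((t m)^2).divisors.card)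
            rw [one_mul, one_mul]
            refine mul_le_mul hz' hpow (one_div_nonneg.mpr (Real.rpow_nonneg (Nat.cast_nonneg _) _))
              (mul_nonneg (Nat.cast_nonneg _) (Nat.cast_nonneg _))
        _ = ((QS.rho n (s m) : ℝ) * (s m:ℝ)^(-σ)) * ((((t m)^2).divisors.card : ℝ) * (t m:ℝ)^(-2:ℝ)) := by ring
    · rw [MulChar.map_nonunit _ (by rwa [ZMod.isUnit_iff_coprime]), norm_zero, zero_mul, zero_div]
      exact hF0 _

/-- the main constant -/
def Kc (n : ℕ) : ℝ := classNumber ((n:ℤ)^2+4) * (Nat.log 2 (n+1) + 1) * (16 / rD n)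

theorem main_ineq {n : ℕ} (hn : 1 ≤ n) [NeZero (n^2+4)] : jacChar (n^2+4) ≠ 1 ∧
    (∏ p ∈ (4*(n^2+4)).primeFactors, (1 - ((p:ℕ):ℝ)⁻¹)) * ‖LFunction (jacChar (n^2+4)) 1‖ ≤ Kc n * Gc := by
  obtain ⟨B, hB, hsum⟩ := QS.rho_sum_le hn
  set χ := jacChar (n^2+4) with hχ
  have hr := rD_pos n
  have hK : 0 ≤ Kc n := by rw [Kc]; positivity
  have hG := Gc_nonneg
  set P : ℝ := ∏ p ∈ (4*(n^2+4)).primeFactors, (1 - ((p:ℕ):ℝ)⁻¹) with hP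
  have hb : ∀ σ : ℝ, 1 < σ → ‖LFunctionTrivChar₁ (4*(n^2+4)) σ‖ * ‖LFunction χ σ‖ ≤
      σ * (Kc n + B * (σ - 1) / (σ - 1/2)) * Gc := by
    intro σ hσ
    obtain ⟨hs, hle⟩ := rho_series (fun m => (QS.rho n m : ℝ)) (fun m => by positivity) (by simp [QS.rho]) (Kc n) B hB
      (fun X hX => by have := hsum X hX; push_cast at this; exact this) hK hσ
    have h := L_prod_le n hσ hs
    have h1 : (σ:ℂ) ≠ 1 := by
      intro h; exact hσ.ne' (by exact_mod_cast h)
    rw [LFunctionTrivChar₁, Function.update_of_ne h1, norm_mul]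
    have e : ‖(σ:ℂ) - 1‖ = σ - 1 := by
      rw [← Complex.ofReal_one, ← Complex.ofReal_sub, Complex.norm_real, Real.norm_of_nonneg (by linarith)]
    rw [e]
    rw [norm_mul] at h
    have hσ1 : σ - 1 ≠ 0 := by linarith
    calc _ = (σ-1) * (‖LFunction (1 : DirichletCharacter ℂ (4*(n^2+4))) σ‖ * ‖LFunction χ σ‖) := by
          rw [mul_assoc]
      _ ≤ (σ-1) * ((σ * (Kc n / (σ-1) + B / (σ - 1/2))) * Gc) := by
          have : 0 ≤ σ - 1 := by linarith
          exact mul_le_mul_of_nonneg_left (h.trans (mul_le_mul_of_nonneg_right hle hG)) this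
      _ = _ := by field_simp
  have hT : Tendsto (fun σ : ℝ => σ * (Kc n + B * (σ - 1) / (σ - 1/2)) * Gc) (𝓝[>] 1) (𝓝 (Kc n * Gc)) := by
    have : ContinuousAt (fun σ : ℝ => σ * (Kc n + B * (σ - 1) / (σ - 1/2)) * Gc) 1 := by
      have : (1:ℝ) - 1/2 ≠ 0 := by norm_num
      fun_prop (disch := assumption)
    have h2 := this.tendsto
    simp only [sub_self, mul_zero, zero_div, add_zero, one_mul] at h2
    exact h2.mono_left nhdsWithin_le_nhds
  have hP1 : ‖LFunctionTrivChar₁ (4*(n^2+4)) 1‖ = P := by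
    rw [LFunctionTrivChar₁, Function.update_self, hP, norm_prod]
    refine Finset.prod_congr rfl fun p hp => ?_
    have h1 : (1:ℝ) ≤ p := by exact_mod_cast (Nat.prime_of_mem_primeFactors hp).one_lt.le
    have : (1 - (p:ℂ)⁻¹) = ((1 - (p:ℝ)⁻¹ : ℝ) : ℂ) := by push_cast; rfl
    rw [this, Complex.norm_real, Real.norm_of_nonneg]
    have := inv_le_one_of_one_le₀ h1
    linarith
  have hP0 : 0 < P := by
    rw [← hP1]; exact norm_pos_iff.mpr (DirichletCharacter.LFunctionTrivChar₁_apply_one_ne_zero (4*(n^2+4)))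
  have hcR : Continuous (fun σ : ℝ => (σ:ℂ)) := Complex.continuous_ofReal
  have hTP : Tendsto (fun σ : ℝ => ‖LFunctionTrivChar₁ (4*(n^2+4)) σ‖) (𝓝[>] 1) (𝓝 P) := by
    have h := (((DirichletCharacter.differentiable_LFunctionTrivChar₁ (4*(n^2+4))).continuous.comp hcR).norm.tendsto 1)
    simp only [Function.comp, Complex.ofReal_one] at h
    rw [hP1] at h
    exact h.mono_left nhdsWithin_le_nhds
  have hne : χ ≠ 1 := by
    intro h1
    have hT2 : Tendsto (fun σ : ℝ => ‖LFunctionTrivChar₁ (4*(n^2+4)) σ‖ * ‖LFunctionTrivChar₁ (4*(n^2+4)) σ‖) (𝓝[>] 1) (𝓝 (P * P)) := hTP.mul hTP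
    have hT3 : Tendsto (fun σ : ℝ => (σ-1) * (σ * (Kc n + B * (σ - 1) / (σ - 1/2)) * Gc)) (𝓝[>] 1) (𝓝 (0 * (Kc n * Gc))) := by
      refine Tendsto.mul ?_ hT
      have : ContinuousAt (fun σ : ℝ => σ - 1) 1 := by fun_prop
      have h2 := this.tendsto
      rw [sub_self] at h2
      exact h2.mono_left nhdsWithin_le_nhds
    have hle : P * P ≤ 0 * (Kc n * Gc) := by
      refine le_of_tendsto_of_tendsto hT2 hT3 ?_
      filter_upwards [self_mem_nhdsWithin] with σ hσ
      have hσ' : 1 < σ := hσ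
      have h := hb σ hσ'
      rw [h1] at h
      have hs1 : (σ:ℂ) ≠ 1 := by
        intro h; exact hσ'.ne' (by exact_mod_cast h)
      have e : ‖(σ:ℂ) - 1‖ = σ - 1 := by
        rw [← Complex.ofReal_one, ← Complex.ofReal_sub, Complex.norm_real, Real.norm_of_nonneg (by linarith)]
      have e2 : ‖LFunctionTrivChar₁ (4*(n^2+4)) σ‖ = (σ-1) * ‖LFunction (1 : DirichletCharacter ℂ (4*(n^2+4))) σ‖ := by
        rw [LFunctionTrivChar₁, Function.update_of_ne hs1, norm_mul, e]
      calc _ = (σ-1) * (‖LFunctionTrivChar₁ (4*(n^2+4)) σ‖ * ‖LFunction (1 : DirichletCharacter ℂ (4*(n^2+4))) σ‖) := by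
            rw [e2]; ring
        _ ≤ _ := by
            have : 0 ≤ σ - 1 := by linarith
            gcongr
    nlinarith
  refine ⟨hne, ?_⟩
  have hTL : Tendsto (fun σ : ℝ => ‖LFunction χ σ‖) (𝓝[>] 1) (𝓝 ‖LFunction χ 1‖) := by
    have h := (((DirichletCharacter.differentiable_LFunction hne).continuous.comp hcR).norm.tendsto 1)
    simp only [Function.comp, Complex.ofReal_one] at h
    exact h.mono_left nhdsWithin_le_nhds
  refine le_of_tendsto_of_tendsto (hTP.mul hTL) hT ?_
  filter_upwards [self_mem_nhdsWithin] with σ hσ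
  exact hb σ hσ

end

section

open DirichletCharacter (LFunction)
open Filter Topology

lemma one_le_prod_mul_card {N : ℕ} (hN : N ≠ 0) :
    1 ≤ (∏ p ∈ N.primeFactors, (1 - ((p:ℕ):ℝ)⁻¹)) * (N.divisors.card : ℝ) := by
  rw [Nat.card_divisors hN, Nat.cast_prod, ← Finset.prod_mul_distrib]
  refine Finset.one_le_prod fun p hp => ?_
  have hp' := Nat.prime_of_mem_primeFactors hp
  have h2 : (2:ℝ) ≤ p := by exact_mod_cast hp'.two_le
  have h1 : 1 ≤ N.factorization p :=
    (hp'.dvd_iff_one_le_factorization hN).mp (Nat.dvd_of_mem_primeFactors hp)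
  have h1' : (2:ℝ) ≤ ((N.factorization p + 1 : ℕ) : ℝ) := by exact_mod_cast Nat.succ_le_succ h1
  have h3 : ((p:ℕ):ℝ)⁻¹ ≤ 2⁻¹ := inv_anti₀ (by norm_num) h2
  nlinarith

lemma lower_bound (δ : ℝ) (hδ : 0 < δ) : ∃ c : ℝ, 0 < c ∧ ∀ n : ℕ, 1 ≤ n →
    c * (n:ℝ)^(1-δ) ≤ (classNumber ((n:ℤ)^2+4) : ℝ) := by
  obtain ⟨ε, hε, he⟩ : ∃ ε : ℝ, 0 < ε ∧ 6 * ε = δ := ⟨δ/6, by positivity, by ring⟩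
  obtain ⟨c, hc, hS⟩ := siegel ε hε
  obtain ⟨C, hC, hd⟩ := divisor_bound ε hε
  have hG := Gc_nonneg
  refine ⟨c * (20:ℝ)^(-(3*ε)) / (16 * C^2 * (Gc + 1)), by positivity, fun n hn => ?_⟩
  have : NeZero (n^2+4) := ⟨by positivity⟩
  have : NeZero (4*(n^2+4)) := ⟨by positivity⟩
  obtain ⟨hne, hmain⟩ := main_ineq hn
  have hL := hS _ _ (jacChar_sq (n^2+4)) hne
  have hN0 : 4*(n^2+4) ≠ 0 := by positivity
  have hP := one_le_prod_mul_card hN0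
  have hdN := hd (4*(n^2+4))
  have hNle : 4*(n^2+4) ≤ 20*n^2 := by nlinarith
  have hNge : n + 1 ≤ 4*(n^2+4) := by nlinarith
  clear hne
  generalize ‖LFunction (jacChar (n^2+4)) 1‖ = L at hmain hL
  generalize 4*(n^2+4) = N at *
  have hn0 : (0:ℝ) < n := by exact_mod_cast hn
  have hNpos : (0:ℝ) < N := by exact_mod_cast Nat.pos_of_ne_zero hN0
  have hlog : ((Nat.log 2 (n+1) : ℕ):ℝ) + 1 ≤ C * (N:ℝ)^ε := by
    have h := hd (2^(Nat.log 2 (n+1)))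
    rw [Nat.divisors_prime_pow Nat.prime_two, Finset.card_map, Finset.card_range] at h
    push_cast at h
    refine h.trans ?_
    have h2 : (2:ℝ)^(Nat.log 2 (n+1)) ≤ N := by
      exact_mod_cast (Nat.pow_log_le_self 2 (by omega)).trans hNge
    have := Real.rpow_le_rpow (by positivity) h2 hε.le
    exact mul_le_mul_of_nonneg_left this (by linarith)
  set h : ℝ := (classNumber ((n:ℤ)^2+4) : ℝ) with hh
  have hh0 : 0 ≤ h := Nat.cast_nonneg _
  have hr := lt_rD n
  have hK : Kc n ≤ h * (C * (N:ℝ)^ε) * (16 / n) := by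
    rw [Kc]
    have : 16 / rD n ≤ 16 / n := by gcongr
    have h16 : 0 ≤ 16 / rD n := by have := rD_pos n; positivity
    exact mul_le_mul (mul_le_mul_of_nonneg_left hlog hh0) this h16 (by positivity)
  have hL0 : 0 ≤ L := le_trans (by positivity) hL
  have hK0 : 0 ≤ Kc n := by rw [Kc]; have := rD_pos n; positivity
  have h1 : L ≤ (Kc n * Gc) * (C * (N:ℝ)^ε) := by
    calc L = 1 * L := (one_mul L).symm
      _ ≤ ((∏ p ∈ N.primeFactors, (1 - ((p:ℕ):ℝ)⁻¹)) * (N.divisors.card : ℝ)) * L :=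
          mul_le_mul_of_nonneg_right hP hL0
      _ = ((∏ p ∈ N.primeFactors, (1 - ((p:ℕ):ℝ)⁻¹)) * L) * (N.divisors.card : ℝ) := by ring
      _ ≤ (Kc n * Gc) * (N.divisors.card : ℝ) := mul_le_mul_of_nonneg_right hmain (Nat.cast_nonneg _)
      _ ≤ _ := mul_le_mul_of_nonneg_left hdN (mul_nonneg hK0 hG)
  have h2 : c * (N:ℝ)^(-ε) ≤ (h * (C * (N:ℝ)^ε) * (16 / n) * (Gc + 1)) * (C * (N:ℝ)^ε) := by
    refine (hL.trans h1).trans (mul_le_mul_of_nonneg_right ?_ (by positivity))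
    exact mul_le_mul hK (by linarith) hG (by positivity)
  have e1 : (N:ℝ)^ε * (N:ℝ)^(-ε) = 1 := by
    rw [← Real.rpow_add hNpos]; simp
  have e3 : (N:ℝ)^(-(3*ε)) = (N:ℝ)^(-ε) * (N:ℝ)^(-ε) * (N:ℝ)^(-ε) := by
    rw [← Real.rpow_add hNpos, ← Real.rpow_add hNpos]; congr 1; ring
  have h3 : c * (N:ℝ)^(-(3*ε)) * n ≤ 16 * C^2 * (Gc+1) * h := by
    have hq : 0 ≤ (N:ℝ)^(-ε) * (N:ℝ)^(-ε) * n := by positivity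
    have h4 := mul_le_mul_of_nonneg_right h2 hq
    calc _ = c * (N:ℝ)^(-ε) * ((N:ℝ)^(-ε) * (N:ℝ)^(-ε) * n) := by rw [e3]; ring
      _ ≤ _ := h4
      _ = 16 * C^2 * (Gc+1) * h * ((N:ℝ)^ε * (N:ℝ)^(-ε)) * ((N:ℝ)^ε * (N:ℝ)^(-ε)) := by
          field_simp
      _ = _ := by rw [e1]; ring
  have h5 : (20:ℝ)^(-(3*ε)) * (n:ℝ)^(-δ) ≤ (N:ℝ)^(-(3*ε)) := by
    have e : (20:ℝ)^(-(3*ε)) * (n:ℝ)^(-δ) = (20 * (n:ℝ)^2)^(-(3*ε)) := by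
      rw [Real.mul_rpow (by norm_num) (by positivity), ← Real.rpow_natCast (n:ℝ) 2, ← Real.rpow_mul hn0.le]
      congr 2
      push_cast; linarith
    rw [e]
    exact Real.rpow_le_rpow_of_nonpos hNpos (by exact_mod_cast hNle) (by linarith)
  have e6 : (n:ℝ)^(1-δ) = n * (n:ℝ)^(-δ) := by
    rw [sub_eq_add_neg, Real.rpow_add hn0, Real.rpow_one]
  rw [div_mul_eq_mul_div, div_le_iff₀ (by positivity), e6]
  calc _ = c * ((20:ℝ)^(-(3*ε)) * (n:ℝ)^(-δ)) * n := by ring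
    _ ≤ c * (N:ℝ)^(-(3*ε)) * n := by gcongr
    _ ≤ _ := h3
    _ = _ := by ring

end

/-- For `Δ⁻ₙ = n² + 4`, `log h(Δ⁻ₙ) = log n + o(log n)` as `n → ∞`. -/
theorem log_classNumber_add_asymptotic :
    Filter.Tendsto
      (fun n : ℕ =>
        (Real.log (classNumber ((n : ℤ) ^ 2 + 4)) - Real.log n) / Real.log n)
      Filter.atTop (nhds 0) := by
  rw [Metric.tendsto_nhds]
  intro δ hδ
  obtain ⟨C, hC, hup⟩ := classNumber_upper (δ/3) (by positivity)
  obtain ⟨c, hc, hlo⟩ := lower_bound (δ/3) (by positivity)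
  have hlog : Filter.Tendsto (fun n : ℕ => Real.log (n:ℝ)) Filter.atTop Filter.atTop :=
    Real.tendsto_log_atTop.comp tendsto_natCast_atTop_atTop
  filter_upwards [Filter.eventually_ge_atTop 1, hlog.eventually_ge_atTop 1,
    hlog.eventually_ge_atTop (Real.log C / (δ/3)), hlog.eventually_ge_atTop (-Real.log c / (δ/3))] with n hn h1 h2 h3
  have hn0 : (0:ℝ) < n := by exact_mod_cast hn
  have hl := hlo n hn
  have hu := hup n hn
  have hp : 0 < c * (n:ℝ)^(1-δ/3) := by positivity
  have a := Real.log_le_log hp hl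
  have b := Real.log_le_log (hp.trans_le hl) hu
  rw [Real.log_mul hc.ne' (by positivity), Real.log_rpow hn0] at a
  rw [Real.log_mul (by linarith) (by positivity), Real.log_rpow hn0] at b
  rw [div_le_iff₀ (by positivity)] at h2 h3
  rw [Real.dist_eq, sub_zero, abs_div, abs_of_pos (show (0:ℝ) < Real.log n by linarith),
    div_lt_iff₀ (by linarith), abs_lt]
  have : 0 < δ * Real.log n := by positivity
  constructor <;> nlinarith
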